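/- Let d ≥ 1 and let u : [0,∞) × ℝ^d → ℝ^d be smooth, ℤ^d-periodic in x, bounded on [0,T] × ℝ^d for every T > 0, and divergence-free in x. Suppose there is a function τ : (0,∞) → (0,∞) such that for every ν > 0, every s ≥ 0, and every smooth, ℤ^d-periodic-in-x, mean-zero solution θ of ∂_t θ − νΔθ + u·∇θ = 0 on [s,∞) × ℝ^d, one has ‖θ(s+τ(ν),·)‖_{L²} ≤ (1/2)‖θ(s,·)‖_{L²}, and suppose there exist constants C > 0 and p > 0 such that τ(ν) ≤ C|log ν|^{2/p} for all ν ∈ (0, 1/C]. Then the diffeomorphism σ in the total dissipation theorem can be chosen so that additionally there exists C' > 0 with σ'(t) ≤ C' (|log₂(1−t)|^{2+2/p} + 1)/(1−t) for all t ∈ [0,1). -/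

import Mathlib

open Real MeasureTheory Filter

/-- Spatial partial derivative in the `i`-th coordinate direction. -/
noncomputable def pd (d : ℕ) (i : Fin d) (f : (Fin d → ℝ) → ℝ) (x : Fin d → ℝ) : ℝ :=
  fderiv ℝ f x (Pi.single i 1)

/-- Spatial Laplacian: sum of second partial derivatives. -/
noncomputable def lap (d : ℕ) (f : (Fin d → ℝ) → ℝ) (x : Fin d → ℝ) : ℝ :=
  ∑ i, pd d i (fun y => pd d i f y) x

/-- The `L²` norm on the unit cell `[0,1]^d` of a `ℤ^d`-periodic function. -/
noncomputable def L2norm (d : ℕ) (f : (Fin d → ℝ) → ℝ) : ℝ :=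
  Real.sqrt (∫ x in Set.Icc (0 : Fin d → ℝ) 1, (f x) ^ 2)

/-- `ℤ^d`-periodicity. -/
def PeriodicIn (d : ℕ) (f : (Fin d → ℝ) → ℝ) : Prop :=
  ∀ x : Fin d → ℝ, ∀ k : Fin d → ℤ, f (x + fun i => (k i : ℝ)) = f x

set_option linter.unusedVariables false

/-- Periodicity for functions with values in any type. -/
def Per {d : ℕ} {F : Type*} (f : (Fin d → ℝ) → F) : Prop :=
  ∀ x : Fin d → ℝ, ∀ k : Fin d → ℤ, f (x + fun i => (k i : ℝ)) = f x

/-- Fourier exponential. -/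
noncomputable def ek {d : ℕ} (k : Fin d → ℤ) (x : Fin d → ℝ) : ℂ :=
  Complex.exp (2 * π * Complex.I * ∑ i, (k i : ℂ) * (x i : ℂ))

/-- Fourier coefficient over the unit cell. -/
noncomputable def fc {d : ℕ} (f : (Fin d → ℝ) → ℂ) (k : Fin d → ℤ) : ℂ :=
  ∫ x in Set.Icc (0 : Fin d → ℝ) 1, f x * ek (-k) x

/-- weight -/
noncomputable def wt {d : ℕ} (k : Fin d → ℤ) : ℝ := 1 + ∑ i, |(k i : ℝ)|

theorem wt_one_le {d : ℕ} (k : Fin d → ℤ) : 1 ≤ wt k := by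
  unfold wt
  have : 0 ≤ ∑ i, |(k i : ℝ)| := Finset.sum_nonneg (fun i _ => abs_nonneg _)
  linarith

theorem wt_pos {d : ℕ} (k : Fin d → ℤ) : 0 < wt k := lt_of_lt_of_le one_pos (wt_one_le k)

theorem abs_le_wt {d : ℕ} (k : Fin d → ℤ) (i : Fin d) : |(k i : ℝ)| ≤ wt k := by
  unfold wt
  have := Finset.single_le_sum (f := fun i => |(k i : ℝ)|) (fun i _ => abs_nonneg _) (Finset.mem_univ i)
  linarith

theorem wt_mul {d : ℕ} (k j : Fin d → ℤ) : wt k ≤ wt (k - j) * wt j := by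
  unfold wt
  have h1 : 0 ≤ ∑ i, |((k - j) i : ℝ)| := Finset.sum_nonneg (fun i _ => abs_nonneg _)
  have h2 : 0 ≤ ∑ i, |(j i : ℝ)| := Finset.sum_nonneg (fun i _ => abs_nonneg _)
  have h3 : ∑ i, |(k i : ℝ)| ≤ ∑ i, |((k - j) i : ℝ)| + ∑ i, |(j i : ℝ)| := by
    rw [← Finset.sum_add_distrib]
    refine Finset.sum_le_sum (fun i _ => ?_)
    have := abs_add_le (((k - j) i : ℤ) : ℝ) (j i : ℝ)
    simpa using this
  nlinarith [mul_nonneg h1 h2]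

theorem summable_pi_prod (n : ℕ) (g : ℤ → ℝ) (hg : Summable g) (h0 : ∀ z, 0 ≤ g z) :
    Summable (fun k : Fin n → ℤ => ∏ i, g (k i)) := by
  induction n with
  | zero => exact Summable.of_finite
  | succ n ih =>
    have h := hg.mul_of_nonneg ih h0 (fun k => Finset.prod_nonneg (fun i _ => h0 _))
    rw [← (Fin.consEquiv (fun _ : Fin (n+1) => ℤ)).summable_iff]
    refine h.congr (fun x => ?_)
    simp [Fin.prod_univ_succ, Fin.consEquiv]

theorem summable_wt {d : ℕ} : Summable (fun k : Fin d → ℤ => ((wt k) ^ (2 * d))⁻¹) := by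
  have hg : Summable (fun z : ℤ => ((1 + |(z : ℝ)|) ^ 2)⁻¹) := by
    have h := (Real.summable_one_div_int_pow (p := 2)).2 (by norm_num)
    have h' : Summable (fun z : ℤ => if z = 0 then (1:ℝ) else 0) :=
      summable_of_ne_finset_zero (s := {0}) (by intro b hb; simp at hb; simp [hb])
    refine Summable.of_nonneg_of_le (fun z => by positivity) (fun z => ?_) (h.add h')
    by_cases hz : z = 0
    · simp [hz]
    · simp only [hz, if_false, add_zero, one_div]
      have : (0:ℝ) < |(z:ℝ)| := by positivity
      rw [← sq_abs (z:ℝ)]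
      gcongr
      linarith
  refine Summable.of_nonneg_of_le (fun k => by have := wt_pos k; positivity) (fun k => ?_)
    (summable_pi_prod d _ hg (fun z => by positivity))
  rw [Finset.prod_inv_distrib, Finset.prod_pow]
  have h0 : 0 < ∏ i, (1 + |(k i : ℝ)|) := Finset.prod_pos (fun i _ => by positivity)
  rw [mul_comm, pow_mul]
  refine inv_anti₀ (by positivity) ?_
  refine pow_le_pow_left₀ h0.le ?_ 2
  calc ∏ i, (1 + |(k i : ℝ)|) ≤ ∏ i : Fin d, wt k := by
        refine Finset.prod_le_prod (fun i _ => by positivity) (fun i _ => ?_)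
        unfold wt
        have := Finset.single_le_sum (f := fun i => |(k i : ℝ)|) (fun i _ => abs_nonneg _) (Finset.mem_univ i)
        linarith
    _ = wt k ^ d := by simp

theorem ek_norm {d : ℕ} (k : Fin d → ℤ) (x : Fin d → ℝ) : ‖ek k x‖ = 1 := by
  unfold ek
  have : (2 * π * Complex.I * ∑ i, (k i : ℂ) * (x i : ℂ)) =
      ((2 * π * ∑ i, (k i : ℝ) * (x i : ℝ) : ℝ) : ℂ) * Complex.I := by push_cast; ring
  rw [this, Complex.norm_exp_ofReal_mul_I]

theorem ek_add {d : ℕ} (k j : Fin d → ℤ) (x : Fin d → ℝ) : ek (k + j) x = ek k x * ek j x := by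
  unfold ek
  rw [← Complex.exp_add]
  congr 1
  simp only [Pi.add_apply, Int.cast_add, add_mul, Finset.sum_add_distrib]
  ring

theorem ek_per {d : ℕ} (k : Fin d → ℤ) : Per (ek k) := by
  intro x m
  unfold ek
  rw [Complex.exp_eq_exp_iff_exists_int]
  refine ⟨∑ i, k i * m i, ?_⟩
  simp only [Pi.add_apply]
  push_cast
  simp only [mul_add, Finset.sum_add_distrib]
  ring

theorem ek_hasFDerivAt {d : ℕ} (k : Fin d → ℤ) (x : Fin d → ℝ) :
    HasFDerivAt (ek k) (∑ i, (ContinuousLinearMap.proj (R := ℝ) (φ := fun _ : Fin d => ℝ) i).smulRight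
      (2 * π * Complex.I * (k i : ℂ) * ek k x)) x := by
  unfold ek
  have h : HasFDerivAt (fun x : Fin d → ℝ => 2 * π * Complex.I * ∑ i, (k i : ℂ) * (x i : ℂ))
      (∑ i, (ContinuousLinearMap.proj (R := ℝ) (φ := fun _ : Fin d => ℝ) i).smulRight
      (2 * π * Complex.I * (k i : ℂ))) x := by
    have : ∀ x : Fin d → ℝ, 2 * π * Complex.I * ∑ i, (k i : ℂ) * (x i : ℂ) =
      (∑ i, (ContinuousLinearMap.proj (R := ℝ) (φ := fun _ : Fin d => ℝ) i).smulRight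
      (2 * π * Complex.I * (k i : ℂ))) x := by
      intro x
      simp [Finset.mul_sum]
      refine Finset.sum_congr rfl (fun i _ => by ring)
    simp only [this]
    exact ContinuousLinearMap.hasFDerivAt _
  refine h.cexp.congr_fderiv ?_
  ext v
  simp [Finset.mul_sum]
  refine Finset.sum_congr rfl (fun i _ => by ring)

theorem ek_contDiff {d : ℕ} (k : Fin d → ℤ) : ContDiff ℝ (⊤ : ℕ∞) (ek k) := by
  unfold ek
  have h : ∀ i : Fin d, ContDiff ℝ (⊤ : ℕ∞) (fun x : Fin d → ℝ => ((x i : ℝ) : ℂ)) := fun i =>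
    Complex.ofRealCLM.contDiff.comp (contDiff_apply ℝ ℝ i)
  fun_prop

/-- The integral of a partial derivative of a periodic function vanishes. -/
theorem int_pd_zero {d : ℕ} {F : Type*} [NormedAddCommGroup F] [NormedSpace ℝ F] [CompleteSpace F]
    (f : (Fin d → ℝ) → F) (hf : ContDiff ℝ 1 f) (hp : Per f) (i : Fin d) :
    ∫ x in Set.Icc (0 : Fin d → ℝ) 1, fderiv ℝ f x (Pi.single i 1) = 0 := by
  obtain _ | n := d
  · exact i.elim0
  have hc : Continuous (fun x => fderiv ℝ f x (Pi.single i 1)) :=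
    (hf.continuous_fderiv (by norm_num)).clm_apply continuous_const
  have key := integral_divergence_of_hasFDerivAt_off_countable' (E := F) (0 : Fin (n+1) → ℝ) 1
    (fun _ => zero_le_one) (fun j => if j = i then f else 0)
    (fun j x => if j = i then fderiv ℝ f x else 0) ∅ Set.countable_empty
    (by
      intro j
      by_cases h : j = i
      · simp only [h, if_true]; exact hf.continuous.continuousOn
      · simp only [h, if_false]; exact continuousOn_const)
    (by
      intro x _ j
      by_cases h : j = i
      · simp only [h, if_true]; exact (hf.differentiable (by norm_num) x).hasFDerivAt
      · simp only [h, if_false]; exact hasFDerivAt_const _ _)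
    (by
      have : (fun x => ∑ j : Fin (n+1), (if j = i then fderiv ℝ f x else 0) (Pi.single j 1)) =
        (fun x => fderiv ℝ f x (Pi.single i 1)) := by
        funext x
        rw [Finset.sum_eq_single i]
        · simp
        · intro j _ h; simp [h]
        · simp
      rw [this]
      exact hc.continuousOn.integrableOn_compact isCompact_Icc)
  have e1 : (fun x => ∑ j : Fin (n+1), (if j = i then fderiv ℝ f x else 0) (Pi.single j 1)) =
        (fun x => fderiv ℝ f x (Pi.single i 1)) := by
        funext x
        rw [Finset.sum_eq_single i]
        · simp
        · intro j _ h; simp [h]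
        · simp
  rw [e1] at key
  rw [key]
  refine Finset.sum_eq_zero (fun j _ => ?_)
  by_cases h : j = i
  · subst h
    simp only [if_true]
    rw [sub_eq_zero]
    congr 1
    funext x
    have := hp (j.insertNth ((0 : Fin (n+1) → ℝ) j) x) (Pi.single j 1)
    rw [← this]
    congr 1
    funext l
    refine Fin.succAboveCases j ?_ ?_ l
    · simp
    · intro m; simp
  · simp [h]

theorem mFourier_coe {d : ℕ} (k : Fin d → ℤ) (x : Fin d → ℝ) :
    UnitAddTorus.mFourier k (fun i => (x i : UnitAddCircle)) = ek k x := by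
  simp only [UnitAddTorus.mFourier, ContinuousMap.coe_mk, ek]
  rw [Finset.mul_sum, Complex.exp_sum]
  refine Finset.prod_congr rfl (fun i _ => ?_)
  rw [fourier_coe_apply]
  congr 1
  push_cast
  ring

theorem fc_inv {d : ℕ} (f : (Fin d → ℝ) → ℂ) (hf : Continuous f) (hp : Per f)
    (hs : Summable (fc f)) (x : Fin d → ℝ) : HasSum (fun k => fc f k * ek k x) (f x) := by
  have hq : IsOpenQuotientMap (Pi.map (fun (_ : Fin d) (y : ℝ) => (y : UnitAddCircle))) :=
    IsOpenQuotientMap.piMap (fun _ => QuotientAddGroup.isOpenQuotientMap_mk)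
  let G : UnitAddTorus (Fin d) → ℂ := fun y => f (Function.surjInv hq.surjective y)
  have hG : ∀ x : Fin d → ℝ, G (fun i => (x i : UnitAddCircle)) = f x := by
    intro x
    have h := Function.surjInv_eq hq.surjective (fun i => (x i : UnitAddCircle))
    set z := Function.surjInv hq.surjective (fun i => (x i : UnitAddCircle)) with hz
    have h2 : ∀ i, ∃ m : ℤ, z i = x i + m := by
      intro i
      have := congrFun h i
      simp only [Pi.map_apply] at this
      have h3 : ((z i - x i : ℝ) : UnitAddCircle) = 0 := by
        rw [AddCircle.coe_sub, this, sub_self]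
      rw [AddCircle.coe_eq_zero_iff] at h3
      obtain ⟨n, hn⟩ := h3
      refine ⟨n, ?_⟩
      simp only [zsmul_eq_mul, mul_one] at hn
      linarith
    choose m hm using h2
    show f z = f x
    rw [← hp x m]
    congr 1
    funext i
    exact hm i
  have hGc : Continuous G := by
    rw [← hq.continuous_comp_iff]
    have : G ∘ (Pi.map (fun (_ : Fin d) (y : ℝ) => (y : UnitAddCircle))) = f := by
      funext x
      exact hG x
    rw [this]; exact hf
  have hco : ∀ k, UnitAddTorus.mFourierCoeff G k = fc f k := by
    intro k
    rw [UnitAddTorus.mFourierCoeff_eq_integral G k 0]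
    unfold fc
    have : {x : Fin d → ℝ | ∀ i, x i ∈ Set.Ioc ((0 : Fin d → ℝ) i) ((0 : Fin d → ℝ) i + 1)} =
      Set.pi Set.univ (fun i => Set.Ioc ((0 : Fin d → ℝ) i) ((1 : Fin d → ℝ) i)) := by
      ext x; simp
    rw [this, volume_pi, setIntegral_congr_set Measure.univ_pi_Ioc_ae_eq_Icc]
    congr 1
    funext x
    rw [hG, mFourier_coe, smul_eq_mul, mul_comm]
  have := UnitAddTorus.hasSum_mFourier_series_apply_of_summable (f := ⟨G, hGc⟩)
    (by
      convert hs using 1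
      funext k
      exact hco k) (fun i => (x i : UnitAddCircle))
  simp only [ContinuousMap.coe_mk, hG, mFourier_coe, hco, smul_eq_mul] at this
  exact this

theorem fc_deriv {d : ℕ} (f : (Fin d → ℝ) → ℂ) (hf : ContDiff ℝ 1 f) (hp : Per f) (i : Fin d)
    (k : Fin d → ℤ) :
    fc (fun x => fderiv ℝ f x (Pi.single i 1)) k = 2 * π * Complex.I * (k i : ℂ) * fc f k := by
  have hek : ContDiff ℝ 1 (ek (-k)) := (ek_contDiff (-k)).of_le (by exact_mod_cast le_top)
  have h := int_pd_zero (fun x => f x * ek (-k) x) (hf.mul hek)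
    (fun x m => by simp only [hp x m, ek_per (-k) x m]) i
  have h1 : ∀ x, fderiv ℝ (fun x => f x * ek (-k) x) x (Pi.single i 1) =
     fderiv ℝ f x (Pi.single i 1) * ek (-k) x - 2 * π * Complex.I * (k i : ℂ) * (f x * ek (-k) x) := by
    intro x
    have := ((hf.differentiable (by norm_num) x).hasFDerivAt.mul (ek_hasFDerivAt (-k) x)).fderiv
    have e : (fun x => f x * ek (-k) x) = f * ek (-k) := rfl
    rw [e, this]
    simp [Pi.single_apply]
    ring
  simp only [h1] at h
  rw [integral_sub, integral_const_mul, sub_eq_zero] at h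
  · exact h
  · have hc : Continuous (fun x => fderiv ℝ f x (Pi.single i 1)) :=
      (hf.continuous_fderiv (by norm_num)).clm_apply continuous_const
    exact (hc.mul hek.continuous).continuousOn.integrableOn_compact isCompact_Icc
  · exact (continuous_const.mul (hf.continuous.mul hek.continuous)).continuousOn.integrableOn_compact isCompact_Icc

theorem hasDerivAt_cell {d : ℕ} {F : Type*} [NormedAddCommGroup F] [NormedSpace ℝ F]
    (f : ℝ × (Fin d → ℝ) → F) (I : Set ℝ) (hI : IsOpen I)
    (hf : ContDiffOn ℝ 1 f (I ×ˢ Set.univ)) (t : ℝ) (ht : t ∈ I) :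
    HasDerivAt (fun t => ∫ x in Set.Icc (0 : Fin d → ℝ) 1, f (t, x))
      (∫ x in Set.Icc (0 : Fin d → ℝ) 1, fderiv ℝ f (t, x) (1, 0)) t := by
  obtain ⟨ε, hε, hball⟩ := Metric.isOpen_iff.1 hI t ht
  have hopen : IsOpen (I ×ˢ (Set.univ : Set (Fin d → ℝ))) := hI.prod isOpen_univ
  have hc' : ContinuousOn (fun p => fderiv ℝ f p (1, 0)) (I ×ˢ Set.univ) :=
    (hf.continuousOn_fderiv_of_isOpen hopen le_rfl).clm_apply continuousOn_const
  have hsub : Metric.closedBall t (ε/2) ×ˢ Set.Icc (0 : Fin d → ℝ) 1 ⊆ I ×ˢ Set.univ := by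
    intro p hp
    exact ⟨hball (Metric.closedBall_subset_ball (by linarith) hp.1), trivial⟩
  obtain ⟨M, hM⟩ := ((isCompact_closedBall t (ε/2)).prod
    (isCompact_Icc (a := (0 : Fin d → ℝ)) (b := 1))).exists_bound_of_continuousOn (hc'.mono hsub)
  have hslice : ∀ r ∈ I, ∀ g : ℝ × (Fin d → ℝ) → F, ContinuousOn g (I ×ˢ Set.univ) →
      Continuous (fun x => g (r, x)) := by
    intro r hr g hg
    rw [← continuousOn_univ]
    exact hg.comp (by fun_prop) (fun x _ => ⟨hr, trivial⟩)
  refine (hasDerivAt_integral_of_dominated_loc_of_deriv_le (s := Metric.ball t (ε/2))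
    (F := fun t x => f (t, x)) (F' := fun t x => fderiv ℝ f (t, x) (1, 0))
    (bound := fun _ => M) (Metric.ball_mem_nhds t (by linarith)) ?_ ?_ ?_ ?_ ?_ ?_).2
  · filter_upwards [hI.mem_nhds ht] with r hr
    exact (hslice r hr f hf.continuousOn).aestronglyMeasurable
  · exact (hslice t ht f hf.continuousOn).continuousOn.integrableOn_compact isCompact_Icc
  · exact (hslice t ht _ hc').aestronglyMeasurable
  · refine (ae_restrict_iff' measurableSet_Icc).2 (ae_of_all _ ?_)
    intro x hx r hr
    exact hM (r, x) ⟨Metric.ball_subset_closedBall hr, hx⟩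
  · exact continuous_const.continuousOn.integrableOn_compact isCompact_Icc
  · refine ae_of_all _ ?_
    intro x r hr
    have hrI : r ∈ I := hball (Metric.ball_subset_ball (by linarith) hr)
    have h1 : HasFDerivAt f (fderiv ℝ f (r, x)) (r, x) :=
      ((hf.contDiffAt (hopen.mem_nhds ⟨hrI, trivial⟩)).differentiableAt (by norm_num)).hasFDerivAt
    have h2 : HasDerivAt (fun r : ℝ => (r, x)) (1, 0) r :=
      (hasDerivAt_id r).prodMk (hasDerivAt_const r x)
    exact h1.comp_hasDerivAt r h2

/-- Locally uniformly rapidly decreasing families of coefficients. -/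
def RD {d : ℕ} (F : ℝ → (Fin d → ℤ) → ℂ) : Prop :=
  (∀ k, Continuous (fun t => F t k)) ∧
    ∀ (T : ℝ) (m : ℕ), ∃ A, 0 ≤ A ∧ ∀ t, |t| ≤ T → ∀ k, wt k ^ m * ‖F t k‖ ≤ A

/-- Rapidly decreasing, together with `n` time derivatives. -/
def RDn {d : ℕ} : ℕ → (ℝ → (Fin d → ℤ) → ℂ) → Prop
  | 0, F => RD F
  | n + 1, F => RD F ∧ ∃ F' : ℝ → (Fin d → ℤ) → ℂ,
      (∀ t k, HasDerivAt (fun t => F t k) (F' t k) t) ∧ RDn n F'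

theorem RDn.rd {d n : ℕ} {F : ℝ → (Fin d → ℤ) → ℂ} (h : RDn n F) : RD F := by
  cases n with
  | zero => exact h
  | succ n => exact h.1

theorem RDn.pred {d : ℕ} : ∀ {n : ℕ} {F : ℝ → (Fin d → ℤ) → ℂ}, RDn (n + 1) F → RDn n F
  | 0, _, h => h.1
  | _ + 1, _, h => ⟨h.1, h.2.choose, h.2.choose_spec.1, RDn.pred h.2.choose_spec.2⟩

theorem RD.bound_summable {d : ℕ} {F : ℝ → (Fin d → ℤ) → ℂ} (h : RD F) (T : ℝ) (m : ℕ) :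
    ∃ b : (Fin d → ℤ) → ℝ, Summable b ∧ (∀ k, 0 ≤ b k) ∧
      ∀ t, |t| ≤ T → ∀ k, wt k ^ m * ‖F t k‖ ≤ b k := by
  obtain ⟨A, hA, hb⟩ := h.2 T (m + 2 * d)
  refine ⟨fun k => A * (wt k ^ (2 * d))⁻¹, summable_wt.mul_left A,
    fun k => by have := wt_pos k; positivity, fun t ht k => ?_⟩
  have h1 := hb t ht k
  have h2 := wt_pos k
  show wt k ^ m * ‖F t k‖ ≤ A * (wt k ^ (2 * d))⁻¹
  rw [← div_eq_mul_inv, le_div_iff₀ (by positivity)]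
  calc wt k ^ m * ‖F t k‖ * wt k ^ (2 * d) = wt k ^ (m + 2 * d) * ‖F t k‖ := by rw [pow_add]; ring
    _ ≤ A := h1

theorem RD.bound_summable0 {d : ℕ} {F : ℝ → (Fin d → ℤ) → ℂ} (h : RD F) (T : ℝ) :
    ∃ b : (Fin d → ℤ) → ℝ, Summable b ∧ (∀ k, 0 ≤ b k) ∧
      ∀ t, |t| ≤ T → ∀ k, ‖F t k‖ ≤ b k := by
  obtain ⟨b, h1, h2, h3⟩ := h.bound_summable T 0
  exact ⟨b, h1, h2, fun t ht k => by simpa using h3 t ht k⟩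

theorem RD.add {d : ℕ} {F G : ℝ → (Fin d → ℤ) → ℂ} (hF : RD F) (hG : RD G) :
    RD (fun t k => F t k + G t k) := by
  refine ⟨fun k => (hF.1 k).add (hG.1 k), fun T m => ?_⟩
  obtain ⟨A, hA, ha⟩ := hF.2 T m
  obtain ⟨B, hB, hb⟩ := hG.2 T m
  refine ⟨A + B, by positivity, fun t ht k => ?_⟩
  have := wt_pos k
  calc wt k ^ m * ‖F t k + G t k‖ ≤ wt k ^ m * (‖F t k‖ + ‖G t k‖) := by
        gcongr; exact norm_add_le _ _
    _ ≤ A + B := by rw [mul_add]; exact add_le_add (ha t ht k) (hb t ht k)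

theorem RD.mulk {d : ℕ} {F : ℝ → (Fin d → ℤ) → ℂ} (hF : RD F) (a : (Fin d → ℤ) → ℂ)
    (ha : ∃ B : ℝ, ∃ q : ℕ, 0 ≤ B ∧ ∀ k, ‖a k‖ ≤ B * wt k ^ q) :
    RD (fun t k => a k * F t k) := by
  obtain ⟨B, q, hB, hb⟩ := ha
  refine ⟨fun k => continuous_const.mul (hF.1 k), fun T m => ?_⟩
  obtain ⟨A, hA, ha⟩ := hF.2 T (m + q)
  refine ⟨B * A, by positivity, fun t ht k => ?_⟩
  have := wt_pos k
  rw [norm_mul]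
  calc wt k ^ m * (‖a k‖ * ‖F t k‖) ≤ wt k ^ m * ((B * wt k ^ q) * ‖F t k‖) := by
        gcongr; exact hb k
    _ = B * (wt k ^ (m + q) * ‖F t k‖) := by rw [pow_add]; ring
    _ ≤ B * A := by gcongr; exact ha t ht k

theorem RD.zero {d : ℕ} : RD (fun (_ : ℝ) (_ : Fin d → ℤ) => (0 : ℂ)) :=
  ⟨fun k => continuous_const, fun T m => ⟨0, le_rfl, fun t ht k => by simp⟩⟩

theorem RDn.zero {d : ℕ} : ∀ n, RDn n (fun (_ : ℝ) (_ : Fin d → ℤ) => (0 : ℂ))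
  | 0 => RD.zero
  | n + 1 => ⟨RD.zero, _, fun t k => hasDerivAt_const _ _, RDn.zero n⟩

theorem RDn.add {d : ℕ} : ∀ {n : ℕ} {F G : ℝ → (Fin d → ℤ) → ℂ}, RDn n F → RDn n G →
    RDn n (fun t k => F t k + G t k)
  | 0, _, _, hF, hG => RD.add hF hG
  | _ + 1, _, _, ⟨h1, F', hF', h2⟩, ⟨h3, G', hG', h4⟩ =>
    ⟨h1.add h3, _, fun t k => (hF' t k).add (hG' t k), RDn.add h2 h4⟩

theorem RDn.mulk {d : ℕ} (a : (Fin d → ℤ) → ℂ)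
    (ha : ∃ B : ℝ, ∃ q : ℕ, 0 ≤ B ∧ ∀ k, ‖a k‖ ≤ B * wt k ^ q) :
    ∀ {n : ℕ} {F : ℝ → (Fin d → ℤ) → ℂ}, RDn n F → RDn n (fun t k => a k * F t k)
  | 0, _, hF => RD.mulk hF a ha
  | _ + 1, _, ⟨h1, F', hF', h2⟩ =>
    ⟨h1.mulk a ha, _, fun t k => (hF' t k).const_mul (a k), RDn.mulk a ha h2⟩

theorem RDn.sum {d n : ℕ} {ι : Type*} (s : Finset ι) (F : ι → ℝ → (Fin d → ℤ) → ℂ)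
    (h : ∀ i, RDn n (F i)) : RDn n (fun t k => ∑ i ∈ s, F i t k) := by
  classical
  induction s using Finset.induction_on with
  | empty => simpa using RDn.zero n
  | insert i s hi ih =>
    simp only [Finset.sum_insert hi]
    exact (h i).add ih

/-- Convolution of coefficients. -/
noncomputable def conv {d : ℕ} (F G : ℝ → (Fin d → ℤ) → ℂ) (t : ℝ) (k : Fin d → ℤ) : ℂ :=
  ∑' j, F t (k - j) * G t j

theorem conv_bound {d : ℕ} {F G : ℝ → (Fin d → ℤ) → ℂ} (hF : RD F) (hG : RD G) (T : ℝ) (m : ℕ) :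
    ∃ b : (Fin d → ℤ) → ℝ, Summable b ∧ (∀ k, 0 ≤ b k) ∧
      ∀ t, |t| ≤ T → ∀ k j, wt k ^ m * ‖F t (k - j) * G t j‖ ≤ b j := by
  obtain ⟨A, hA, ha⟩ := hF.2 T m
  obtain ⟨b, h1, h2, h3⟩ := hG.bound_summable T m
  refine ⟨fun j => A * b j, h1.mul_left A, fun j => mul_nonneg hA (h2 j), fun t ht k j => ?_⟩
  have w1 := wt_pos k
  have w2 := wt_pos (k - j)
  have w3 := wt_pos j
  rw [norm_mul]
  calc wt k ^ m * (‖F t (k - j)‖ * ‖G t j‖)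
      ≤ (wt (k - j) * wt j) ^ m * (‖F t (k - j)‖ * ‖G t j‖) := by
        gcongr; exact wt_mul k j
    _ = (wt (k - j) ^ m * ‖F t (k - j)‖) * (wt j ^ m * ‖G t j‖) := by rw [mul_pow]; ring
    _ ≤ A * b j := by
        gcongr
        · exact ha t ht _
        · exact h3 t ht j

theorem conv_summable {d : ℕ} {F G : ℝ → (Fin d → ℤ) → ℂ} (hF : RD F) (hG : RD G) (t : ℝ)
    (k : Fin d → ℤ) : Summable (fun j => F t (k - j) * G t j) := by
  obtain ⟨b, h1, h2, h3⟩ := conv_bound hF hG |t| 0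
  exact Summable.of_norm_bounded h1 (fun j => by simpa using h3 t le_rfl k j)

theorem RD.conv {d : ℕ} {F G : ℝ → (Fin d → ℤ) → ℂ} (hF : RD F) (hG : RD G) : RD (conv F G) := by
  refine ⟨fun k => ?_, fun T m => ?_⟩
  · rw [continuous_iff_continuousAt]
    intro t
    obtain ⟨b, h1, h2, h3⟩ := conv_bound hF hG (|t| + 1) 0
    have hc : ContinuousOn (fun t => _root_.conv F G t k) (Set.Ioo (-(|t| + 1)) (|t| + 1)) := by
      refine continuousOn_tsum (u := b) (fun j => ?_) h1 (fun j r hr => ?_)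
      · exact ((hF.1 _).mul (hG.1 _)).continuousOn
      · simpa using h3 r (abs_le.2 ⟨hr.1.le, hr.2.le⟩) k j
    refine hc.continuousAt (Ioo_mem_nhds ?_ ?_)
    · linarith [neg_abs_le t]
    · linarith [le_abs_self t]
  · obtain ⟨b, h1, h2, h3⟩ := conv_bound hF hG T m
    refine ⟨∑' j, b j, tsum_nonneg h2, fun t ht k => ?_⟩
    have w1 := wt_pos k
    have : wt k ^ m * ‖_root_.conv F G t k‖ = ‖∑' j, (wt k ^ m : ℂ) * (F t (k - j) * G t j)‖ := by
      rw [tsum_mul_left, norm_mul]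
      congr 1
      rw [norm_pow, Complex.norm_real, Real.norm_of_nonneg w1.le]
    rw [this]
    refine tsum_of_norm_bounded h1.hasSum (fun j => ?_)
    rw [norm_mul, norm_pow, Complex.norm_real, Real.norm_of_nonneg w1.le]
    exact h3 t ht k j

theorem conv_hasDerivAt {d : ℕ} {F G F' G' : ℝ → (Fin d → ℤ) → ℂ} (hF : RD F) (hG : RD G)
    (hF' : RD F') (hG' : RD G')
    (h1 : ∀ t k, HasDerivAt (fun t => F t k) (F' t k) t)
    (h2 : ∀ t k, HasDerivAt (fun t => G t k) (G' t k) t) (t : ℝ) (k : Fin d → ℤ) :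
    HasDerivAt (fun t => conv F G t k) (conv F' G t k + conv F G' t k) t := by
  obtain ⟨b, hb1, hb2, hb3⟩ := conv_bound hF' hG (|t| + 1) 0
  obtain ⟨b', hb1', hb2', hb3'⟩ := conv_bound hF hG' (|t| + 1) 0
  have htm : t ∈ Set.Ioo (-(|t| + 1)) (|t| + 1) :=
    ⟨by linarith [neg_abs_le t], by linarith [le_abs_self t]⟩
  have := hasDerivAt_tsum_of_isPreconnected (u := fun j => b j + b' j) (y₀ := t) (y := t)
    (g := fun j t => F t (k - j) * G t j)
    (g' := fun j t => F' t (k - j) * G t j + F t (k - j) * G' t j) (hb1.add hb1') isOpen_Ioo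
    isPreconnected_Ioo (fun j r _ => (h1 r (k - j)).mul (h2 r j))
    (fun j r hr => (norm_add_le _ _).trans (add_le_add
      (by simpa using hb3 r (abs_le.2 ⟨hr.1.le, hr.2.le⟩) k j)
      (by simpa using hb3' r (abs_le.2 ⟨hr.1.le, hr.2.le⟩) k j)))
    htm (conv_summable hF hG t k) htm
  rw [(conv_summable hF' hG t k).tsum_add (conv_summable hF hG' t k)] at this
  exact this

theorem RDn.conv {d : ℕ} : ∀ {n : ℕ} {F G : ℝ → (Fin d → ℤ) → ℂ}, RDn n F → RDn n G →
    RDn n (conv F G)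
  | 0, _, _, hF, hG => RD.conv hF hG
  | n + 1, F, G, hF, hG => by
    obtain ⟨h1, F', hF', h2⟩ := id hF
    obtain ⟨h3, G', hG', h4⟩ := id hG
    exact ⟨h1.conv h3, _, conv_hasDerivAt h1 h3 h2.rd h4.rd hF' hG',
      (RDn.conv h2 hG.pred).add (RDn.conv hF.pred h4)⟩

/-- Fourier synthesis. -/
noncomputable def syn {d : ℕ} (F : ℝ → (Fin d → ℤ) → ℂ) (p : ℝ × (Fin d → ℝ)) : ℂ :=
  ∑' k, F p.1 k * ek k p.2

theorem syn_summable {d : ℕ} {F : ℝ → (Fin d → ℤ) → ℂ} (hF : RD F) (p : ℝ × (Fin d → ℝ)) :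
    Summable (fun k => F p.1 k * ek k p.2) := by
  obtain ⟨b, h1, h2, h3⟩ := hF.bound_summable0 |p.1|
  exact Summable.of_norm_bounded h1 (fun k => by
    rw [norm_mul, ek_norm, mul_one]; exact h3 _ le_rfl k)

theorem syn_norm_summable {d : ℕ} {F : ℝ → (Fin d → ℤ) → ℂ} (hF : RD F) (p : ℝ × (Fin d → ℝ)) :
    Summable (fun k => ‖F p.1 k * ek k p.2‖) := by
  obtain ⟨b, h1, h2, h3⟩ := hF.bound_summable0 |p.1|
  exact Summable.of_nonneg_of_le (fun k => norm_nonneg _) (fun k => by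
    rw [norm_mul, ek_norm, mul_one]; exact h3 _ le_rfl k) h1

theorem syn_per {d : ℕ} (F : ℝ → (Fin d → ℤ) → ℂ) (t : ℝ) : Per (fun x => syn F (t, x)) := by
  intro x m
  simp only [syn, ek_per _ x m]

theorem syn_add {d : ℕ} {F G : ℝ → (Fin d → ℤ) → ℂ} (hF : RD F) (hG : RD G)
    (p : ℝ × (Fin d → ℝ)) : syn (fun t k => F t k + G t k) p = syn F p + syn G p := by
  unfold syn
  rw [← (syn_summable hF p).tsum_add (syn_summable hG p)]
  congr 1; funext k; ring

theorem syn_const_mul {d : ℕ} (a : ℂ) (F : ℝ → (Fin d → ℤ) → ℂ)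
    (p : ℝ × (Fin d → ℝ)) : syn (fun t k => a * F t k) p = a * syn F p := by
  unfold syn
  rw [← tsum_mul_left]
  congr 1; funext k; ring

theorem syn_sum {d : ℕ} {ι : Type*} (s : Finset ι) (F : ι → ℝ → (Fin d → ℤ) → ℂ)
    (h : ∀ i, RD (F i)) (p : ℝ × (Fin d → ℝ)) :
    syn (fun t k => ∑ i ∈ s, F i t k) p = ∑ i ∈ s, syn (F i) p := by
  unfold syn
  rw [← Summable.tsum_finsetSum (fun i _ => syn_summable (h i) p)]
  congr 1; funext k; rw [Finset.sum_mul]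

theorem syn_conv {d : ℕ} {F G : ℝ → (Fin d → ℤ) → ℂ} (hF : RD F) (hG : RD G)
    (p : ℝ × (Fin d → ℝ)) : syn (conv F G) p = syn F p * syn G p := by
  have h1 := syn_norm_summable hF p
  have h2 := syn_norm_summable hG p
  unfold syn
  rw [tsum_mul_tsum_of_summable_norm h1 h2]
  have hs := summable_mul_of_summable_norm h1 h2
  let e : (Fin d → ℤ) × (Fin d → ℤ) ≃ (Fin d → ℤ) × (Fin d → ℤ) :=
    { toFun := fun q => (q.1 - q.2, q.2)
      invFun := fun q => (q.1 + q.2, q.2)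
      left_inv := fun q => by simp
      right_inv := fun q => by simp }
  rw [← e.tsum_eq]
  have hs' := e.summable_iff.2 hs
  refine Eq.trans ?_ (Summable.tsum_prod hs').symm
  congr 1; funext k
  unfold conv
  rw [← tsum_mul_right]
  congr 1; funext j
  show F p.1 (k - j) * G p.1 j * ek k p.2 = F p.1 (k - j) * ek (k - j) p.2 * (G p.1 j * ek j p.2)
  have : ek k p.2 = ek (k - j) p.2 * ek j p.2 := by rw [← ek_add]; simp
  rw [this]; ring

/-- The Fourier multiplier of the `i`-th partial derivative. -/
noncomputable def dk {d : ℕ} (i : Fin d) (k : Fin d → ℤ) : ℂ := 2 * π * Complex.I * (k i : ℂ)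

theorem dk_norm {d : ℕ} (i : Fin d) (k : Fin d → ℤ) : ‖dk i k‖ = 2 * π * |(k i : ℝ)| := by
  unfold dk
  simp [abs_of_pos Real.pi_pos]

theorem dk_poly {d : ℕ} (i : Fin d) : ∃ B : ℝ, ∃ q : ℕ, 0 ≤ B ∧ ∀ k, ‖dk i k‖ ≤ B * wt k ^ q := by
  refine ⟨2 * π, 1, by positivity, fun k => ?_⟩
  rw [dk_norm, pow_one]
  gcongr
  exact abs_le_wt k i

theorem syn_hasFDerivAt {d : ℕ} {F F' : ℝ → (Fin d → ℤ) → ℂ} (hF : RD F) (hF' : RD F')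
    (h1 : ∀ t k, HasDerivAt (fun t => F t k) (F' t k) t) (p : ℝ × (Fin d → ℝ)) :
    HasFDerivAt (syn F) ((ContinuousLinearMap.fst ℝ ℝ (Fin d → ℝ)).smulRight (syn F' p) +
      ∑ i, ((ContinuousLinearMap.proj (R := ℝ) (φ := fun _ : Fin d => ℝ) i).comp
        (ContinuousLinearMap.snd ℝ ℝ (Fin d → ℝ))).smulRight
          (syn (fun t k => dk i k * F t k) p)) p := by
  have hD : ∀ i, RD (fun t k => dk i k * F t k) := fun i => hF.mulk _ (dk_poly i)
  obtain ⟨b, hb1, hb2, hb3⟩ := hF'.bound_summable0 (|p.1| + 1)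
  choose c hc1 hc2 hc3 using fun i => (hD i).bound_summable0 (|p.1| + 1)
  let L : (Fin d → ℤ) → ℝ × (Fin d → ℝ) → (ℝ × (Fin d → ℝ) →L[ℝ] ℂ) := fun k p =>
    (ContinuousLinearMap.fst ℝ ℝ (Fin d → ℝ)).smulRight (F' p.1 k * ek k p.2) +
      ∑ i, ((ContinuousLinearMap.proj (R := ℝ) (φ := fun _ : Fin d => ℝ) i).comp
        (ContinuousLinearMap.snd ℝ ℝ (Fin d → ℝ))).smulRight
          (dk i k * F p.1 k * ek k p.2)
  have hL : ∀ k p, HasFDerivAt (fun p : ℝ × (Fin d → ℝ) => F p.1 k * ek k p.2) (L k p) p := by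
    intro k p
    have e1 : HasFDerivAt (fun p : ℝ × (Fin d → ℝ) => F p.1 k) _ p :=
      (h1 p.1 k).hasFDerivAt.comp p hasFDerivAt_fst
    have e2 : HasFDerivAt (fun p : ℝ × (Fin d → ℝ) => ek k p.2) _ p :=
      (ek_hasFDerivAt k p.2).comp p hasFDerivAt_snd
    refine (e1.mul e2).congr_fderiv ?_
    ext v
    · simp [L]; ring
    · simp [L, dk, Finset.mul_sum]
      refine Finset.sum_congr rfl (fun i _ => by ring)
  have hnorm : ∀ k (q : ℝ × (Fin d → ℝ)), q ∈ Set.Ioo (-(|p.1| + 1)) (|p.1| + 1) ×ˢ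
      (Set.univ : Set (Fin d → ℝ)) → ‖L k q‖ ≤ b k + ∑ i, c i k := by
    intro k q hq
    have hq1 : |q.1| ≤ |p.1| + 1 := abs_le.2 ⟨hq.1.1.le, hq.1.2.le⟩
    refine (norm_add_le _ _).trans (add_le_add ?_ ((norm_sum_le _ _).trans
      (Finset.sum_le_sum fun i _ => ?_)))
    · rw [ContinuousLinearMap.norm_smulRight_apply, norm_mul, ek_norm, mul_one]
      calc _ ≤ 1 * b k := by
            gcongr
            · exact ContinuousLinearMap.norm_fst_le ℝ ℝ _
            · exact hb3 _ hq1 k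
        _ = b k := one_mul _
    · rw [ContinuousLinearMap.norm_smulRight_apply, norm_mul, ek_norm, mul_one]
      calc _ ≤ 1 * c i k := by
            gcongr
            · refine ContinuousLinearMap.opNorm_le_bound _ zero_le_one (fun v => ?_)
              simp only [ContinuousLinearMap.comp_apply, ContinuousLinearMap.coe_snd',
                ContinuousLinearMap.proj_apply, one_mul]
              exact (norm_le_pi_norm v.2 i).trans (norm_snd_le v)
            · exact hc3 i _ hq1 k
        _ = c i k := one_mul _
  have hsum : Summable (fun k => b k + ∑ i, c i k) :=
    hb1.add (summable_sum (fun i _ => hc1 i))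
  have hp : p ∈ Set.Ioo (-(|p.1| + 1)) (|p.1| + 1) ×ˢ (Set.univ : Set (Fin d → ℝ)) :=
    ⟨⟨by linarith [neg_abs_le p.1], by linarith [le_abs_self p.1]⟩, trivial⟩
  have := hasFDerivAt_tsum_of_isPreconnected hsum (isOpen_Ioo.prod isOpen_univ)
    (isPreconnected_Ioo.prod isPreconnected_univ) (fun k q _ => hL k q) hnorm hp
    (syn_summable hF p) hp
  refine this.congr_fderiv ?_
  refine HasSum.tsum_eq ?_
  refine HasSum.add ?_ (hasSum_sum (fun i _ => ?_))
  · exact (syn_summable hF' p).hasSum.mapL (ContinuousLinearMap.smulRightL ℝ _ ℂ (ContinuousLinearMap.fst ℝ ℝ (Fin d → ℝ)))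
  · exact (syn_summable (hD i) p).hasSum.mapL (ContinuousLinearMap.smulRightL ℝ _ ℂ
      ((ContinuousLinearMap.proj (R := ℝ) (φ := fun _ : Fin d => ℝ) i).comp
        (ContinuousLinearMap.snd ℝ ℝ (Fin d → ℝ))))

theorem syn_continuous {d : ℕ} {F : ℝ → (Fin d → ℤ) → ℂ} (hF : RD F) : Continuous (syn F) := by
  rw [continuous_iff_continuousAt]
  intro p
  obtain ⟨b, h1, h2, h3⟩ := hF.bound_summable0 (|p.1| + 1)
  have hc : ContinuousOn (syn F) (Set.Ioo (-(|p.1| + 1)) (|p.1| + 1) ×ˢ (Set.univ : Set (Fin d → ℝ))) := by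
    refine continuousOn_tsum (u := b) (fun k => ?_) h1 (fun k r hr => ?_)
    · exact (((hF.1 k).comp continuous_fst).mul
        ((ek_contDiff k).continuous.comp continuous_snd)).continuousOn
    · rw [norm_mul, ek_norm, mul_one]
      exact h3 _ (abs_le.2 ⟨hr.1.1.le, hr.1.2.le⟩) k
  refine hc.continuousAt (prod_mem_nhds (Ioo_mem_nhds ?_ ?_) univ_mem)
  · linarith [neg_abs_le p.1]
  · linarith [le_abs_self p.1]

theorem syn_contDiff {d : ℕ} : ∀ {n : ℕ} {F : ℝ → (Fin d → ℤ) → ℂ}, RDn n F → ContDiff ℝ n (syn F)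
  | 0, _, hF => by
    exact contDiff_zero.2 (syn_continuous hF)
  | n + 1, F, hF => by
    obtain ⟨h1, F', hF', h2⟩ := id hF
    push_cast
    rw [contDiff_succ_iff_hasFDerivAt]
    refine ⟨_, ?_, syn_hasFDerivAt h1 h2.rd hF'⟩
    refine ContDiff.add ?_ (ContDiff.sum (fun i _ => ?_))
    · exact contDiff_const.smulRight (syn_contDiff h2)
    · exact contDiff_const.smulRight (syn_contDiff (hF.pred.mulk _ (dk_poly i)))

/-- Smooth in space-time and periodic in space. -/
def SP {d : ℕ} {F : Type*} [NormedAddCommGroup F] [NormedSpace ℝ F]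
    (f : ℝ × (Fin d → ℝ) → F) : Prop :=
  ContDiff ℝ (⊤ : ℕ∞) f ∧ ∀ t, Per (fun x => f (t, x))

theorem SP.fderiv_apply {d : ℕ} {F : Type*} [NormedAddCommGroup F] [NormedSpace ℝ F]
    {f : ℝ × (Fin d → ℝ) → F} (hf : SP f) (v : ℝ × (Fin d → ℝ)) : SP (fun p => fderiv ℝ f p v) := by
  refine ⟨(hf.1.fderiv_right (m := (⊤ : ℕ∞)) (by simp)).clm_apply contDiff_const, ?_⟩
  intro t x k
  have h : (fun p : ℝ × (Fin d → ℝ) => f (p + (0, fun i => (k i : ℝ)))) = f := by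
    funext p
    have := hf.2 p.1 p.2 k
    have e : p + ((0 : ℝ), fun i => (k i : ℝ)) = (p.1, p.2 + fun i => (k i : ℝ)) := by
      ext <;> simp
    rw [e]
    exact this
  have h2 := fderiv_comp_add_right (𝕜 := ℝ) (f := f) (x := (t, x)) (0, fun i => (k i : ℝ))
  rw [h] at h2
  simp only
  rw [h2]
  simp

noncomputable def fcT {d : ℕ} (f : ℝ × (Fin d → ℝ) → ℂ) (t : ℝ) (k : Fin d → ℤ) : ℂ :=
  fc (fun x => f (t, x)) k

theorem fcT_hasDerivAt {d : ℕ} {f : ℝ × (Fin d → ℝ) → ℂ} (hf : SP f) (t : ℝ) (k : Fin d → ℤ) :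
    HasDerivAt (fun t => fcT f t k) (fcT (fun p => fderiv ℝ f p (1, 0)) t k) t := by
  have hek : ContDiff ℝ (⊤ : ℕ∞) (fun p : ℝ × (Fin d → ℝ) => ek (-k) p.2) :=
    (ek_contDiff (-k)).comp contDiff_snd
  have h := hasDerivAt_cell (fun p => f p * ek (-k) p.2) Set.univ isOpen_univ
    ((hf.1.mul hek).of_le (by exact_mod_cast le_top)).contDiffOn t trivial
  refine h.congr_deriv ?_
  unfold fcT fc
  congr 1
  funext x
  have e2 : HasFDerivAt (fun p : ℝ × (Fin d → ℝ) => ek (-k) p.2) _ (t, x) :=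
      HasFDerivAt.comp (g := ek (-k)) (t, x) (ek_hasFDerivAt (-k) x) hasFDerivAt_snd
  have := (((hf.1.differentiable (by simp)) (t, x)).hasFDerivAt.mul e2).fderiv
  have e : (fun p => f p * ek (-k) p.2) = f * (fun p => ek (-k) p.2) := rfl
  rw [e, this]
  simp
  ring

theorem fcT_bound {d : ℕ} (T : ℝ) (m : ℕ) : ∀ {f : ℝ × (Fin d → ℝ) → ℂ} (hf : SP f),
    ∃ A, 0 ≤ A ∧ ∀ t, |t| ≤ T → ∀ k, wt k ^ m * ‖fcT f t k‖ ≤ A := by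
  induction m with
  | zero =>
    intro f hf
    obtain ⟨M, hM⟩ := ((isCompact_Icc (a := -T) (b := T)).prod
      (isCompact_Icc (a := (0 : Fin d → ℝ)) (b := 1))).exists_bound_of_continuousOn
      hf.1.continuous.continuousOn
    refine ⟨max M 0 * (volume (Set.Icc (0 : Fin d → ℝ) 1)).toReal, by positivity, fun t ht k => ?_⟩
    rw [pow_zero, one_mul]
    refine norm_setIntegral_le_of_norm_le_const isCompact_Icc.measure_lt_top ?_
    intro x hx
    rw [norm_mul, ek_norm, mul_one]
    exact (hM (t, x) ⟨abs_le.1 ht, hx⟩).trans (le_max_left _ _)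
  | succ m ih =>
    intro f hf
    obtain ⟨A, hA, ha⟩ := ih hf
    choose B hB hb using fun i : Fin d => ih (hf.fderiv_apply (0, Pi.single i 1))
    refine ⟨A + ∑ i, B i, add_nonneg hA (Finset.sum_nonneg fun i _ => hB i), fun t ht k => ?_⟩
    have hw := wt_pos k
    have h1 : ∀ i, |(k i : ℝ)| * ‖fcT f t k‖ ≤ ‖fcT (fun p => fderiv ℝ f p (0, Pi.single i 1)) t k‖ := by
      intro i
      have hs : ContDiff ℝ 1 (fun x => f (t, x)) :=
        (hf.1.comp (contDiff_prodMk_right t)).of_le (by exact_mod_cast le_top)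
      have := fc_deriv (fun x => f (t, x)) hs (hf.2 t) i k
      have e : (fun x => fderiv ℝ (fun x => f (t, x)) x (Pi.single i 1)) =
          fun x => fderiv ℝ f (t, x) (0, Pi.single i 1) := by
        funext x
        have h2 : HasFDerivAt (fun x => f (t, x)) _ x :=
          ((hf.1.differentiable (by simp)) (t, x)).hasFDerivAt.comp x (hasFDerivAt_prodMk_right t x)
        rw [h2.fderiv]
        simp
      rw [e] at this
      unfold fcT
      rw [this, norm_mul]
      gcongr
      have := dk_norm i k
      unfold dk at this
      rw [this]
      nlinarith [Real.pi_gt_three, abs_nonneg (k i : ℝ)]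
    have h2 : wt k ^ (m + 1) * ‖fcT f t k‖ = wt k ^ m * ‖fcT f t k‖ +
        ∑ i, wt k ^ m * (|(k i : ℝ)| * ‖fcT f t k‖) := by
      rw [← Finset.mul_sum, ← Finset.sum_mul, pow_succ]
      conv_lhs => rw [show wt k = 1 + ∑ i, |(k i : ℝ)| from rfl]
      rw [show wt k = 1 + ∑ i, |(k i : ℝ)| from rfl]
      ring
    rw [h2]
    refine add_le_add (ha t ht k) (Finset.sum_le_sum fun i _ => ?_)
    refine le_trans ?_ (hb i t ht k)
    gcongr
    exact h1 i

theorem fcT_RD {d : ℕ} {f : ℝ × (Fin d → ℝ) → ℂ} (hf : SP f) : RD (fcT f) :=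
  ⟨fun k => continuous_iff_continuousAt.2 fun t => (fcT_hasDerivAt hf t k).continuousAt,
    fun T m => fcT_bound T m hf⟩

theorem fcT_RDn {d : ℕ} : ∀ (n : ℕ) {f : ℝ × (Fin d → ℝ) → ℂ} (hf : SP f), RDn n (fcT f)
  | 0, _, hf => fcT_RD hf
  | n + 1, _, hf => ⟨fcT_RD hf, _, fcT_hasDerivAt hf, fcT_RDn n (hf.fderiv_apply _)⟩

theorem syn_fcT {d : ℕ} {f : ℝ × (Fin d → ℝ) → ℂ} (hf : SP f) (p : ℝ × (Fin d → ℝ)) :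
    syn (fcT f) p = f p := by
  have hc : Continuous (fun x => f (p.1, x)) := hf.1.continuous.comp (by fun_prop)
  obtain ⟨b, h1, h2, h3⟩ := (fcT_RD hf).bound_summable0 |p.1|
  exact (fc_inv (fun x => f (p.1, x)) hc (hf.2 p.1)
    (Summable.of_norm_bounded h1 (fun k => h3 p.1 le_rfl k)) p.2).tsum_eq

/-! ### Duhamel -/

noncomputable def duh (A : ℝ) (h : ℝ → ℂ) (t : ℝ) : ℂ :=
  ((Real.exp (-A * t) : ℝ) : ℂ) * ∫ s in (0:ℝ)..t, ((Real.exp (A * s) : ℝ) : ℂ) * h s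

theorem duh_hasDerivAt (A : ℝ) (h : ℝ → ℂ) (hc : Continuous h) (t : ℝ) :
    HasDerivAt (duh A h) (-A * duh A h t + h t) t := by
  have hcc : Continuous (fun s => ((Real.exp (A * s) : ℝ) : ℂ) * h s) := by
    have : Continuous (fun s => ((Real.exp (A * s) : ℝ) : ℂ)) :=
      Complex.continuous_ofReal.comp (by fun_prop)
    exact this.mul hc
  have h1 := intervalIntegral.integral_hasDerivAt_right (hcc.intervalIntegrable 0 t)
    (hcc.stronglyMeasurableAtFilter _ _) hcc.continuousAt
  have h2 : HasDerivAt (fun t => ((Real.exp (-A * t) : ℝ) : ℂ)) ((Real.exp (-A * t) * (-A) : ℝ) : ℂ) t := by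
    have : HasDerivAt (fun t => Real.exp (-A * t)) (Real.exp (-A * t) * (-A)) t := by
      simpa using ((hasDerivAt_id t).const_mul (-A)).exp
    exact this.ofReal_comp
  refine (h2.mul h1).congr_deriv ?_
  unfold duh
  have h3 : ((Real.exp (-A * t) : ℝ) : ℂ) * ((Real.exp (A * t) : ℝ) : ℂ) = 1 := by
    rw [← Complex.ofReal_mul, ← Real.exp_add]; simp
  rw [← mul_assoc ((Real.exp (-A * t) : ℝ) : ℂ) ((Real.exp (A * t) : ℝ) : ℂ), h3]
  push_cast
  ring

theorem duh_zero (A : ℝ) (h : ℝ → ℂ) (hz : ∀ t ≤ 0, h t = 0) (t : ℝ) (ht : t ≤ 0) :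
    duh A h t = 0 := by
  unfold duh
  rw [intervalIntegral.integral_congr (g := fun _ => (0:ℂ))]
  · simp
  · intro s hs
    rw [Set.uIcc_of_ge ht] at hs
    simp [hz s hs.2]

theorem duh_bound (A l R T : ℝ) (h : ℝ → ℂ)
    (hb : ∀ s, 0 ≤ s → s ≤ T → ‖h s‖ ≤ R * (A + l) * Real.exp (l * s)) (hR : 0 ≤ R)
    (t : ℝ) (ht : 0 ≤ t) (htT : t ≤ T) : ‖duh A h t‖ ≤ R * Real.exp (l * t) := by
  unfold duh
  rw [norm_mul, Complex.norm_real, Real.norm_of_nonneg (Real.exp_pos _).le]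
  have hd : ∀ s : ℝ, HasDerivAt (fun s => R * Real.exp ((A + l) * s))
      (R * (A + l) * Real.exp ((A + l) * s)) s := by
    intro s
    have : HasDerivAt (fun t => Real.exp ((A + l) * t)) (Real.exp ((A + l) * s) * (A + l)) s := by
      simpa using ((hasDerivAt_id s).const_mul (A + l)).exp
    exact (this.const_mul R).congr_deriv (by ring)
  have hcont : Continuous (fun s => R * (A + l) * Real.exp ((A + l) * s)) := by fun_prop
  have h_int := intervalIntegral.integral_eq_sub_of_hasDerivAt (a := 0) (b := t)
    (fun s _ => hd s) (hcont.intervalIntegrable 0 t)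
  have h1 : ‖∫ s in (0:ℝ)..t, ((Real.exp (A * s) : ℝ) : ℂ) * h s‖ ≤
      ∫ s in (0:ℝ)..t, R * (A + l) * Real.exp ((A + l) * s) := by
    refine intervalIntegral.norm_integral_le_of_norm_le ht ?_ (hcont.intervalIntegrable 0 t)
    refine ae_of_all _ (fun s hs => ?_)
    rw [norm_mul, Complex.norm_real, Real.norm_of_nonneg (Real.exp_pos _).le, add_mul, Real.exp_add]
    calc Real.exp (A * s) * ‖h s‖ ≤ Real.exp (A * s) * (R * (A + l) * Real.exp (l * s)) := by
          gcongr; exact hb s hs.1.le (hs.2.trans htT)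
      _ = _ := by ring
  rw [h_int] at h1
  calc _ ≤ Real.exp (-A * t) * (R * Real.exp ((A + l) * t) - R * Real.exp ((A + l) * 0)) := by gcongr
    _ ≤ Real.exp (-A * t) * (R * Real.exp ((A + l) * t)) := by
        have : 0 ≤ R * Real.exp ((A + l) * 0) := by positivity
        gcongr; linarith
    _ = R * (Real.exp (-A * t) * Real.exp ((A + l) * t)) := by ring
    _ = R * Real.exp (l * t) := by rw [← Real.exp_add]; ring_nf

noncomputable def Ak {d : ℕ} (κ : ℝ) (k : Fin d → ℤ) : ℝ := κ * ∑ i, (2 * π * |(k i : ℝ)|) ^ 2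

theorem Ak_nonneg {d : ℕ} {κ : ℝ} (hκ : 0 < κ) (k : Fin d → ℤ) : 0 ≤ Ak κ k :=
  mul_nonneg hκ.le (Finset.sum_nonneg fun i _ => sq_nonneg _)

theorem Ak_eq {d : ℕ} (κ : ℝ) (k : Fin d → ℤ) : ((Ak κ k : ℝ) : ℂ) = - (κ * ∑ i, dk i k * dk i k) := by
  unfold Ak dk
  push_cast
  rw [← mul_neg, ← Finset.sum_neg_distrib]
  congr 1
  refine Finset.sum_congr rfl (fun i _ => ?_)
  have : ((|(k i : ℝ)| : ℝ) : ℂ) ^ 2 = (k i : ℂ) ^ 2 := by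
    rw [← Complex.ofReal_pow, sq_abs]; push_cast; rfl
  rw [mul_pow, this]
  ring_nf
  rw [Complex.I_sq]
  ring

theorem duh_RD {d : ℕ} {κ : ℝ} (hκ : 0 < κ) {H : ℝ → (Fin d → ℤ) → ℂ} (hH : RD H)
    (hz : ∀ t ≤ 0, ∀ k, H t k = 0) : RD (fun t k => duh (Ak κ k) (fun s => H s k) t) := by
  refine ⟨fun k => continuous_iff_continuousAt.2 fun t =>
    (duh_hasDerivAt (Ak κ k) (fun s => H s k) (hH.1 k) t).continuousAt, fun T m => ?_⟩
  obtain ⟨A, hA, ha⟩ := hH.2 T m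
  refine ⟨A * Real.exp T, by positivity, fun t ht k => ?_⟩
  have hw := wt_pos k
  have hAk := Ak_nonneg hκ k
  show wt k ^ m * ‖duh (Ak κ k) (fun s => H s k) t‖ ≤ A * Real.exp T
  rcases le_total t 0 with h0 | h0
  · rw [duh_zero _ _ (fun t ht => hz t ht k) t h0]
    simp; positivity
  · have := duh_bound (Ak κ k) 1 (A / wt k ^ m) T (fun s => H s k) (by
      intro s hs hsT
      have h1 := ha s (by rwa [abs_of_nonneg hs]) k
      have h2 : ‖H s k‖ ≤ A / wt k ^ m := by rw [le_div_iff₀ (by positivity)]; linarith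
      have h3 : 1 ≤ (Ak κ k + 1) * Real.exp (1 * s) := by
        have : 1 ≤ Real.exp (1 * s) := Real.one_le_exp (by linarith)
        nlinarith
      have h4 : 0 ≤ A / wt k ^ m := by positivity
      rw [mul_assoc]
      nlinarith) (by positivity) t h0 ((le_abs_self t).trans ht)
    calc _ ≤ wt k ^ m * (A / wt k ^ m * Real.exp (1 * t)) := by gcongr
      _ = A * Real.exp t := by field_simp
      _ ≤ A * Real.exp T := by gcongr; exact (le_abs_self t).trans ht

theorem conv_le {d : ℕ} {F : ℝ → (Fin d → ℤ) → ℂ} (hF : RD F) (T : ℝ) (m : ℕ) :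
    ∃ M, 0 ≤ M ∧ ∀ t, |t| ≤ T → ∀ (G : ℝ → (Fin d → ℤ) → ℂ) (B : ℝ),
      (∀ j, wt j ^ m * ‖G t j‖ ≤ B) → ∀ k, wt k ^ m * ‖conv F G t k‖ ≤ M * B := by
  obtain ⟨b, h1, h2, h3⟩ := hF.bound_summable T m
  refine ⟨∑' k, b k, tsum_nonneg h2, fun t ht G B hB k => ?_⟩
  have w1 := wt_pos k
  have : wt k ^ m * ‖_root_.conv F G t k‖ = ‖∑' j, (wt k ^ m : ℂ) * (F t (k - j) * G t j)‖ := by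
    rw [tsum_mul_left, norm_mul]
    congr 1
    rw [norm_pow, Complex.norm_real, Real.norm_of_nonneg w1.le]
  rw [this]
  have hs : HasSum (fun j => b (k - j) * B) ((∑' k, b k) * B) := by
    have := ((Equiv.subLeft k).hasSum_iff (f := b)).2 h1.hasSum
    exact this.mul_right B
  refine tsum_of_norm_bounded hs (fun j => ?_)
  have w2 := wt_pos (k - j)
  have w3 := wt_pos j
  rw [norm_mul, norm_pow, Complex.norm_real, Real.norm_of_nonneg w1.le, norm_mul]
  calc wt k ^ m * (‖F t (k - j)‖ * ‖G t j‖)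
      ≤ (wt (k - j) * wt j) ^ m * (‖F t (k - j)‖ * ‖G t j‖) := by
        gcongr; exact wt_mul k j
    _ = (wt (k - j) ^ m * ‖F t (k - j)‖) * (wt j ^ m * ‖G t j‖) := by rw [mul_pow]; ring
    _ ≤ b (k - j) * B := by
        gcongr
        · exact h2 _
        · exact h3 t ht _
        · exact hB j

noncomputable def stp {d : ℕ} (U : Fin d → ℝ → (Fin d → ℤ) → ℂ) (G : ℝ → (Fin d → ℤ) → ℂ)
    (t : ℝ) (k : Fin d → ℤ) : ℂ := ∑ i, (- dk i k) * conv (U i) G t k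

theorem stp_RD {d : ℕ} {U : Fin d → ℝ → (Fin d → ℤ) → ℂ} {G : ℝ → (Fin d → ℤ) → ℂ}
    (hU : ∀ i, RD (U i)) (hG : RD G) : RD (stp U G) := by
  refine RDn.sum (n := 0) Finset.univ (fun i t k => (- dk i k) * conv (U i) G t k) (fun i => ?_)
  refine RD.mulk ((hU i).conv hG) _ ?_
  obtain ⟨B, q, h1, h2⟩ := dk_poly i
  exact ⟨B, q, h1, fun k => by rw [norm_neg]; exact h2 k⟩

noncomputable def src {d : ℕ} (κ : ℝ) (U : Fin d → ℝ → (Fin d → ℤ) → ℂ)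
    (g : ℝ → (Fin d → ℤ) → ℂ) : ℕ → ℝ → (Fin d → ℤ) → ℂ
  | 0 => g
  | n + 1 => stp U (fun t k => duh (Ak κ k) (fun s => src κ U g n s k) t)

noncomputable def itr {d : ℕ} (κ : ℝ) (U : Fin d → ℝ → (Fin d → ℤ) → ℂ)
    (g : ℝ → (Fin d → ℤ) → ℂ) (n : ℕ) (t : ℝ) (k : Fin d → ℤ) : ℂ :=
  duh (Ak κ k) (fun s => src κ U g n s k) t

theorem src_succ {d : ℕ} (κ : ℝ) (U : Fin d → ℝ → (Fin d → ℤ) → ℂ)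
    (g : ℝ → (Fin d → ℤ) → ℂ) (n : ℕ) (s : ℝ) (k : Fin d → ℤ) :
    src κ U g (n+1) s k = ∑ i, (- dk i k) * conv (U i) (itr κ U g n) s k := rfl

theorem src_prop {d : ℕ} {κ : ℝ} (hκ : 0 < κ) {U : Fin d → ℝ → (Fin d → ℤ) → ℂ}
    {g : ℝ → (Fin d → ℤ) → ℂ} (hU : ∀ i, RD (U i)) (hg : RD g) (hz : ∀ t ≤ 0, ∀ k, g t k = 0) (n : ℕ) :
    RD (src κ U g n) ∧ ∀ t ≤ 0, ∀ k, src κ U g n t k = 0 := by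
  induction n with
  | zero => exact ⟨hg, hz⟩
  | succ n ih =>
    refine ⟨stp_RD hU (duh_RD hκ ih.1 ih.2), fun t ht k => ?_⟩
    have : ∀ j, duh (Ak κ j) (fun s => src κ U g n s j) t = 0 := fun j =>
      duh_zero _ _ (fun t ht => ih.2 t ht j) t ht
    simp [src, stp, conv, this]

theorem itr_zero {d : ℕ} {κ : ℝ} (hκ : 0 < κ) {U : Fin d → ℝ → (Fin d → ℤ) → ℂ}
    {g : ℝ → (Fin d → ℤ) → ℂ} (hU : ∀ i, RD (U i)) (hg : RD g) (hz : ∀ t ≤ 0, ∀ k, g t k = 0) (n : ℕ)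
    (t : ℝ) (ht : t ≤ 0) (k : Fin d → ℤ) : itr κ U g n t k = 0 :=
  duh_zero _ _ (fun t ht => (src_prop hκ hU hg hz n).2 t ht k) t ht

theorem itr_bound {d : ℕ} {κ : ℝ} (hκ : 0 < κ) {U : Fin d → ℝ → (Fin d → ℤ) → ℂ}
    {g : ℝ → (Fin d → ℤ) → ℂ} (hU : ∀ i, RD (U i)) (hg : RD g) (hz : ∀ t ≤ 0, ∀ k, g t k = 0)
    (T : ℝ) (m : ℕ) : ∃ B, 0 ≤ B ∧ ∀ n t, |t| ≤ T → ∀ k,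
      wt k ^ m * ‖itr κ U g n t k‖ ≤ B * (1/2) ^ n := by
  obtain ⟨B, hB, hb⟩ := hg.2 T m
  choose M' hM' hm' using fun i => conv_le (hU i) T m
  set M := ∑ i, M' i with hM
  have hM0 : 0 ≤ M := Finset.sum_nonneg fun i _ => hM' i
  have hMi : ∀ i, M' i ≤ M := fun i => Finset.single_le_sum (fun i _ => hM' i) (Finset.mem_univ i)
  set l := d * (M ^ 2 / κ) + 1 with hl
  have hl1 : 1 ≤ l := by rw [hl]; have : 0 ≤ d * (M ^ 2 / κ) := by positivity
                         linarith
  have hA : ∀ k : Fin d → ℤ, ∑ i, 2 * π * |(k i : ℝ)| * M ≤ (Ak κ k + l) / 2 := by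
    intro k
    have h1 : ∀ i, 2 * π * |(k i : ℝ)| * M ≤ (κ * (2 * π * |(k i : ℝ)|) ^ 2 + M ^ 2 / κ) / 2 := by
      intro i
      set y := 2 * π * |(k i : ℝ)|
      have : 0 ≤ (κ * y - M) ^ 2 / κ := by positivity
      have e : (κ * y - M) ^ 2 / κ = κ * y ^ 2 - 2 * (y * M) + M ^ 2 / κ := by field_simp; ring
      linarith
    calc _ ≤ ∑ i, (κ * (2 * π * |(k i : ℝ)|) ^ 2 + M ^ 2 / κ) / 2 := Finset.sum_le_sum fun i _ => h1 i
      _ = (Ak κ k + d * (M ^ 2 / κ)) / 2 := by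
        rw [← Finset.sum_div, Finset.sum_add_distrib, ← Finset.mul_sum]
        simp [Ak]
      _ ≤ _ := by linarith
  have key : ∀ n t, 0 ≤ t → t ≤ T → ∀ k,
      wt k ^ m * ‖itr κ U g n t k‖ ≤ B * (1/2) ^ n * Real.exp (l * t) := by
    intro n
    induction n with
    | zero =>
      intro t h0 hT k
      have hw := wt_pos k
      have hAk := Ak_nonneg hκ k
      have := duh_bound (Ak κ k) l (B / wt k ^ m) T (fun s => g s k) (by
        intro s hs hsT
        have h1 := hb s (by rwa [abs_of_nonneg hs]) k
        have h2 : ‖g s k‖ ≤ B / wt k ^ m := by rw [le_div_iff₀ (by positivity)]; linarith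
        have h3 : 1 ≤ (Ak κ k + l) * Real.exp (l * s) := by
          have : 1 ≤ Real.exp (l * s) := Real.one_le_exp (by positivity)
          nlinarith
        have h4 : 0 ≤ B / wt k ^ m := by positivity
        rw [mul_assoc]
        nlinarith) (by positivity) t h0 hT
      calc _ ≤ wt k ^ m * (B / wt k ^ m * Real.exp (l * t)) := by gcongr; exact this
        _ = _ := by field_simp
    | succ n ih =>
      intro t h0 hT k
      have hw := wt_pos k
      have hAk := Ak_nonneg hκ k
      have := duh_bound (Ak κ k) l (B * (1/2) ^ (n+1) / wt k ^ m) T (fun s => src κ U g (n+1) s k) (by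
        intro s hs hsT
        have h1 : ∀ i, wt k ^ m * ‖conv (U i) (itr κ U g n) s k‖ ≤ M * (B * (1/2) ^ n * Real.exp (l * s)) := by
          intro i
          refine (hm' i s (by rwa [abs_of_nonneg hs]) (itr κ U g n) _ (fun j => ih s hs hsT j) k).trans ?_
          gcongr
          exact hMi i
        have h2 : wt k ^ m * ‖src κ U g (n+1) s k‖ ≤
            ∑ i, 2 * π * |(k i : ℝ)| * M * (B * (1/2) ^ n * Real.exp (l * s)) := by
          calc wt k ^ m * ‖src κ U g (n+1) s k‖ ≤
              wt k ^ m * ∑ i, ‖(- dk i k) * conv (U i) (itr κ U g n) s k‖ := by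
                gcongr
                rw [src_succ]
                exact norm_sum_le _ _
            _ = ∑ i, 2 * π * |(k i : ℝ)| * (wt k ^ m * ‖conv (U i) (itr κ U g n) s k‖) := by
                rw [Finset.mul_sum]
                refine Finset.sum_congr rfl fun i _ => ?_
                rw [norm_mul, norm_neg, dk_norm]; ring
            _ ≤ _ := by
                refine Finset.sum_le_sum fun i _ => ?_
                exact (mul_le_mul_of_nonneg_left (h1 i) (by positivity)).trans (le_of_eq (by ring))
        rw [← Finset.sum_mul] at h2
        have h3 : wt k ^ m * ‖src κ U g (n+1) s k‖ ≤ (Ak κ k + l) / 2 * (B * (1/2) ^ n * Real.exp (l * s)) :=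
          h2.trans (by gcongr; exact hA k)
        have h4 : ‖src κ U g (n+1) s k‖ ≤ (Ak κ k + l) / 2 * (B * (1/2) ^ n * Real.exp (l * s)) / wt k ^ m := by
          rw [le_div_iff₀ (by positivity)]; linarith
        refine h4.trans (le_of_eq ?_)
        rw [pow_succ]; ring) (by positivity) t h0 hT
      calc _ ≤ wt k ^ m * (B * (1/2) ^ (n+1) / wt k ^ m * Real.exp (l * t)) := by gcongr; exact this
        _ = _ := by field_simp
  refine ⟨B * Real.exp (l * T), by positivity, fun n t ht k => ?_⟩
  rcases le_total t 0 with h0 | h0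
  · rw [itr_zero hκ hU hg hz n t h0]
    simp; positivity
  · have hT := (le_abs_self t).trans ht
    calc _ ≤ _ := key n t h0 hT k
      _ ≤ B * (1/2) ^ n * Real.exp (l * T) := by gcongr
      _ = _ := by ring

theorem coef_solve {d : ℕ} {κ : ℝ} (hκ : 0 < κ) {U : Fin d → ℝ → (Fin d → ℤ) → ℂ}
    {g : ℝ → (Fin d → ℤ) → ℂ} (hU : ∀ i, RD (U i)) (hg : RD g) (hz : ∀ t ≤ 0, ∀ k, g t k = 0) :
    ∃ c : ℝ → (Fin d → ℤ) → ℂ, RD c ∧ (∀ t ≤ 0, ∀ k, c t k = 0) ∧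
      ∀ t k, HasDerivAt (fun t => c t k) (-(Ak κ k) * c t k + (stp U c t k + g t k)) t := by
  have hgeo : Summable (fun n : ℕ => (1/2 : ℝ) ^ n) := summable_geometric_two
  have hsumm : ∀ t k, Summable (fun n => itr κ U g n t k) := by
    intro t k
    obtain ⟨B, hB, hb⟩ := itr_bound hκ hU hg hz |t| 0
    exact Summable.of_norm_bounded (hgeo.mul_left B) (fun n => by simpa using hb n t le_rfl k)
  let c : ℝ → (Fin d → ℤ) → ℂ := fun t k => ∑' n, itr κ U g n t k
  have hconv : ∀ i t k, Summable (fun n => conv (U i) (itr κ U g n) t k) ∧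
      ∑' n, conv (U i) (itr κ U g n) t k = conv (U i) c t k := by
    intro i t k
    obtain ⟨B, hB, hb⟩ := itr_bound hκ hU hg hz |t| 0
    obtain ⟨b, hb1, hb2, hb3⟩ := (hU i).bound_summable0 |t|
    have hs1 : Summable (fun q : ℕ × (Fin d → ℤ) => U i t (k - q.2) * itr κ U g q.1 t q.2) := by
      have hbk : Summable (fun j => b (k - j)) := ((Equiv.subLeft k).summable_iff (f := b)).2 hb1
      refine Summable.of_norm_bounded ((hgeo.mul_left B).mul_of_nonneg hbk
        (fun n => by positivity) (fun j => hb2 _)) (fun q => ?_)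
      have h1 := hb q.1 t le_rfl q.2
      rw [pow_zero, one_mul] at h1
      rw [norm_mul, mul_comm ‖U i t (k - q.2)‖]
      exact mul_le_mul h1 (hb3 t le_rfl _) (norm_nonneg _) (by positivity)
    refine ⟨hs1.prod, ?_⟩
    show ∑' n, ∑' j, U i t (k - j) * itr κ U g n t j = ∑' j, U i t (k - j) * ∑' n, itr κ U g n t j
    rw [← Summable.tsum_comm (f := fun n j => U i t (k - j) * itr κ U g n t j) hs1]
    congr 1; funext j; rw [tsum_mul_left]
  have hsrc : ∀ t k, Summable (fun n => src κ U g (n+1) t k) ∧ ∑' n, src κ U g (n+1) t k = stp U c t k := by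
    intro t k
    have h : HasSum (fun n => src κ U g (n+1) t k) (stp U c t k) := by
      refine hasSum_sum (f := fun i n => (- dk i k) * conv (U i) (itr κ U g n) t k) (fun i _ => ?_)
      rw [← (hconv i t k).2]
      exact (hconv i t k).1.hasSum.mul_left _
    exact ⟨h.summable, h.tsum_eq⟩
  have hder : ∀ t k, HasDerivAt (fun t => c t k) (-(Ak κ k) * c t k + (stp U c t k + g t k)) t := by
    intro t k
    obtain ⟨B, hB, hb⟩ := itr_bound hκ hU hg hz (|t| + 1) 0
    obtain ⟨A, hA, ha⟩ := hg.2 (|t| + 1) 0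
    choose M' hM' hm' using fun i => conv_le (hU i) (|t| + 1) 0
    simp only [pow_zero, one_mul] at hb ha hm'
    set D := ∑ i, ‖dk i k‖ * M' i with hD
    have hD0 : 0 ≤ D := Finset.sum_nonneg fun i _ => mul_nonneg (norm_nonneg _) (hM' i)
    have hAk := Ak_nonneg hκ k
    have hsb : ∀ n r, |r| ≤ |t| + 1 → ‖src κ U g n r k‖ ≤ (A + 2 * D * B) * (1/2) ^ n := by
      intro n r hr
      cases n with
      | zero =>
        have := ha r hr k
        simp only [src, pow_zero, mul_one]
        nlinarith [mul_nonneg hD0 hB]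
      | succ n =>
        calc ‖src κ U g (n+1) r k‖ ≤ ∑ i, ‖(- dk i k) * conv (U i) (itr κ U g n) r k‖ := by
              rw [src_succ]; exact norm_sum_le _ _
          _ ≤ ∑ i, ‖dk i k‖ * M' i * (B * (1/2) ^ n) := by
              refine Finset.sum_le_sum fun i _ => ?_
              rw [norm_mul, norm_neg, mul_assoc]
              gcongr
              exact hm' i r hr _ _ (fun j => hb n r hr j) k
          _ = D * (B * (1/2) ^ n) := by rw [← Finset.sum_mul]
          _ ≤ _ := by
              rw [pow_succ]
              have : (0:ℝ) ≤ A * (1/2) ^ n := by positivity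
              nlinarith
    have htm : t ∈ Set.Ioo (-(|t| + 1)) (|t| + 1) :=
      ⟨by linarith [neg_abs_le t], by linarith [le_abs_self t]⟩
    have := hasDerivAt_tsum_of_isPreconnected (u := fun n => (Ak κ k * B + (A + 2 * D * B)) * (1/2) ^ n)
      (y₀ := t) (y := t)
      (g := fun n t => itr κ U g n t k)
      (g' := fun n t => -(Ak κ k) * itr κ U g n t k + src κ U g n t k) (hgeo.mul_left _) isOpen_Ioo
      isPreconnected_Ioo
      (fun n r _ => duh_hasDerivAt (Ak κ k) _ ((src_prop hκ hU hg hz n).1.1 k) r)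
      (fun n r hr => by
        have hr' : |r| ≤ |t| + 1 := abs_le.2 ⟨hr.1.le, hr.2.le⟩
        refine (norm_add_le _ _).trans ?_
        rw [add_mul]
        refine add_le_add ?_ (hsb n r hr')
        rw [norm_mul, norm_neg, Complex.norm_real, Real.norm_of_nonneg hAk, mul_assoc]
        gcongr
        exact hb n r hr' k)
      htm (hsumm t k) htm
    refine this.congr_deriv ?_
    have hs2 : Summable (fun n => src κ U g n t k) := (summable_nat_add_iff 1).1 (hsrc t k).1
    rw [((hsumm t k).mul_left _).tsum_add hs2, tsum_mul_left, hs2.tsum_eq_zero_add, (hsrc t k).2]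
    simp only [src, c]
    ring
  refine ⟨c, ⟨fun k => continuous_iff_continuousAt.2 fun t => (hder t k).continuousAt, ?_⟩, ?_, hder⟩
  · intro T m
    obtain ⟨B, hB, hb⟩ := itr_bound hκ hU hg hz T m
    refine ⟨B * 2, by positivity, fun t ht k => ?_⟩
    have w1 := wt_pos k
    have : wt k ^ m * ‖c t k‖ = ‖∑' n, (wt k ^ m : ℂ) * itr κ U g n t k‖ := by
      rw [tsum_mul_left, norm_mul]
      congr 1
      rw [norm_pow, Complex.norm_real, Real.norm_of_nonneg w1.le]
    rw [this]
    refine tsum_of_norm_bounded (hasSum_geometric_two.mul_left B) (fun n => ?_)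
    rw [norm_mul, norm_pow, Complex.norm_real, Real.norm_of_nonneg w1.le]
    exact hb n t ht k
  · intro t ht k
    simp only [c]
    simp [itr_zero hκ hU hg hz _ t ht k]

theorem syn_dt {d : ℕ} {F F' : ℝ → (Fin d → ℤ) → ℂ} (hF : RD F) (hF' : RD F')
    (h1 : ∀ t k, HasDerivAt (fun t => F t k) (F' t k) t) (p : ℝ × (Fin d → ℝ)) :
    fderiv ℝ (syn F) p (1, 0) = syn F' p := by
  rw [(syn_hasFDerivAt hF hF' h1 p).fderiv]
  simp

theorem syn_dx {d : ℕ} {F : ℝ → (Fin d → ℤ) → ℂ} (hF : RDn 1 F) (p : ℝ × (Fin d → ℝ)) (i : Fin d) :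
    fderiv ℝ (syn F) p (0, Pi.single i 1) = syn (fun t k => dk i k * F t k) p := by
  obtain ⟨h, F', h1, h2⟩ := hF
  rw [(syn_hasFDerivAt h h2 h1 p).fderiv]
  simp [Pi.single_apply]

theorem fderiv_re {d : ℕ} {W : ℝ × (Fin d → ℝ) → ℂ} {p : ℝ × (Fin d → ℝ)}
    (h : DifferentiableAt ℝ W p) (v : ℝ × (Fin d → ℝ)) :
    fderiv ℝ (fun p => (W p).re) p v = (fderiv ℝ W p v).re := by
  have := (Complex.reCLM.hasFDerivAt (x := W p)).comp p h.hasFDerivAt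
  have h2 : HasFDerivAt (fun p => (W p).re) (Complex.reCLM.comp (fderiv ℝ W p)) p := this
  rw [h2.fderiv]; simp

theorem solver {d : ℕ} {κ : ℝ} (hκ : 0 < κ) {U : Fin d → ℝ × (Fin d → ℝ) → ℝ}
    {g : ℝ × (Fin d → ℝ) → ℝ} (hU : ∀ i, SP (U i)) (hg : SP g) (hz : ∀ t ≤ 0, ∀ x, g (t, x) = 0) :
    ∃ w : ℝ × (Fin d → ℝ) → ℝ, SP w ∧ (∀ t ≤ 0, ∀ x, w (t, x) = 0) ∧
      ∀ p, fderiv ℝ w p (1, 0) =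
        κ * ∑ i, fderiv ℝ (fun q => fderiv ℝ w q (0, Pi.single i 1)) p (0, Pi.single i 1)
        - ∑ i, fderiv ℝ (fun q => U i q * w q) p (0, Pi.single i 1) + g p := by
  have hcast : ∀ {f : ℝ × (Fin d → ℝ) → ℝ}, SP f → SP (fun p => (f p : ℂ)) := by
    intro f hf
    refine ⟨Complex.ofRealCLM.contDiff.comp hf.1, fun t x k => ?_⟩
    have := hf.2 t x k
    simp only at this ⊢
    rw [this]
  set V : Fin d → ℝ → (Fin d → ℤ) → ℂ := fun i => fcT (fun p => (U i p : ℂ)) with hV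
  set G : ℝ → (Fin d → ℤ) → ℂ := fcT (fun p => (g p : ℂ)) with hG
  have hVn : ∀ n i, RDn n (V i) := fun n i => fcT_RDn n (hcast (hU i))
  have hGn : ∀ n, RDn n G := fun n => fcT_RDn n (hcast hg)
  obtain ⟨c, hc1, hc2, hc3⟩ := coef_solve hκ (fun i => hVn 0 i) (hGn 0) (by
    intro t ht k
    simp [hG, fcT, fc, hz t ht])
  have hdk2 : ∀ i : Fin d, ∃ B : ℝ, ∃ q : ℕ, 0 ≤ B ∧ ∀ k, ‖-dk i k‖ ≤ B * wt k ^ q := fun i => by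
    obtain ⟨B, q, h1, h2⟩ := dk_poly i
    exact ⟨B, q, h1, fun k => by rw [norm_neg]; exact h2 k⟩
  have hκp : ∃ B : ℝ, ∃ q : ℕ, 0 ≤ B ∧ ∀ k : Fin d → ℤ, ‖(κ : ℂ)‖ ≤ B * wt k ^ q :=
    ⟨‖(κ : ℂ)‖, 0, norm_nonneg _, fun k => by simp⟩
  set E : ℝ → (Fin d → ℤ) → ℂ := fun t k => κ * (∑ i, dk i k * (dk i k * c t k)) +
    (stp V c t k + G t k) with hE
  have hder : ∀ t k, HasDerivAt (fun t => c t k) (E t k) t := by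
    intro t k
    refine (hc3 t k).congr_deriv ?_
    rw [Ak_eq, neg_neg, mul_assoc, Finset.sum_mul]
    simp only [hE, mul_assoc]
  have hEn : ∀ n, RDn n c → RDn n E := by
    intro n h
    refine RDn.add (RDn.mulk (fun _ => (κ : ℂ)) hκp
      (RDn.sum Finset.univ (fun i t k => dk i k * (dk i k * c t k)) fun i =>
        RDn.mulk _ (dk_poly i) (RDn.mulk _ (dk_poly i) h))) (RDn.add ?_ (hGn n))
    exact RDn.sum Finset.univ (fun i t k => (- dk i k) * conv (V i) c t k) fun i =>
      RDn.mulk _ (hdk2 i) ((hVn n i).conv h)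
  have hcn : ∀ n, RDn n c := by
    intro n
    induction n with
    | zero => exact hc1
    | succ n ih => exact ⟨hc1, E, hder, hEn n ih⟩
  have hW : ContDiff ℝ (⊤ : ℕ∞) (syn c) := contDiff_infty.2 fun n => syn_contDiff (hcn n)
  have hdiff : ∀ {F : ℝ → (Fin d → ℤ) → ℂ}, RDn 1 F → Differentiable ℝ (syn F) := fun h =>
    (syn_contDiff h).differentiable (by simp)
  refine ⟨fun p => (syn c p).re, ⟨Complex.reCLM.contDiff.comp hW, fun t x k => ?_⟩, ?_, ?_⟩
  · have := syn_per c t x k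
    simp only at this ⊢
    rw [this]
  · intro t ht x
    simp [syn, hc2 t ht]
  · intro p
    have e1 : fderiv ℝ (fun p => (syn c p).re) p (1, 0) = (syn E p).re := by
      rw [fderiv_re (hdiff (hcn 1) p), syn_dt hc1 (hEn 0 hc1) hder]
    have hd1 : ∀ i, RDn 1 (fun t k => dk i k * c t k) := fun i => RDn.mulk _ (dk_poly i) (hcn 1)
    have e2 : ∀ i, fderiv ℝ (fun q => fderiv ℝ (fun p => (syn c p).re) q (0, Pi.single i 1)) p
        (0, Pi.single i 1) = (syn (fun t k => dk i k * (dk i k * c t k)) p).re := by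
      intro i
      have : (fun q => fderiv ℝ (fun p => (syn c p).re) q (0, Pi.single i 1)) =
          fun q => (syn (fun t k => dk i k * c t k) q).re := by
        funext q
        rw [fderiv_re (hdiff (hcn 1) q), syn_dx (hcn 1)]
      rw [this, fderiv_re (hdiff (hd1 i) p), syn_dx (hd1 i)]
    have hc' : ∀ i, RDn 1 (conv (V i) c) := fun i => (hVn 1 i).conv (hcn 1)
    have e3 : ∀ i, fderiv ℝ (fun q => U i q * (syn c q).re) p (0, Pi.single i 1) =
        (syn (fun t k => dk i k * conv (V i) c t k) p).re := by
      intro i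
      have : (fun q => U i q * (syn c q).re) = fun q => (syn (conv (V i) c) q).re := by
        funext q
        rw [syn_conv (hVn 0 i) hc1, hV]
        simp only
        rw [syn_fcT (hcast (hU i)), Complex.re_ofReal_mul]
      rw [this, fderiv_re (hdiff (hc' i) p), syn_dx (hc' i)]
    rw [e1]
    simp only [e2, e3]
    have s1 : RD (fun t k => ∑ i, dk i k * (dk i k * c t k)) :=
      RDn.sum (n := 0) Finset.univ (fun i t k => dk i k * (dk i k * c t k)) fun i =>
        RDn.mulk _ (dk_poly i) (RDn.mulk _ (dk_poly i) (hcn 0))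
    have s2 : RD (stp V c) := stp_RD (hVn 0) hc1
    have e4 : syn E p = κ * (∑ i, syn (fun t k => dk i k * (dk i k * c t k)) p) +
        ((∑ i, - syn (fun t k => dk i k * conv (V i) c t k) p) + g p) := by
      rw [hE, syn_add (RD.mulk s1 (fun _ => (κ:ℂ)) hκp) (s2.add (hGn 0)), syn_add s2 (hGn 0),
        syn_const_mul, syn_sum Finset.univ (fun i t k => dk i k * (dk i k * c t k)) (fun i =>
          RDn.mulk (n := 0) _ (dk_poly i) (RDn.mulk _ (dk_poly i) (hcn 0))), hG, syn_fcT (hcast hg)]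
      congr 2
      have : stp V c = fun t k => ∑ i, (- dk i k) * conv (V i) c t k := rfl
      rw [this, syn_sum Finset.univ (fun i t k => (- dk i k) * conv (V i) c t k) (fun i =>
        RDn.mulk (n := 0) _ (hdk2 i) ((hVn 0 i).conv (hcn 0)))]
      refine Finset.sum_congr rfl fun i _ => ?_
      rw [← neg_one_mul, ← syn_const_mul]
      congr 1; funext t k; ring
    rw [e4]
    simp only [Complex.add_re, Complex.re_ofReal_mul, Complex.re_sum, Complex.neg_re,
      Complex.ofReal_re, Finset.sum_neg_distrib]
    ring

theorem pd_contDiff {d : ℕ} {f : (Fin d → ℝ) → ℝ} (hf : ContDiff ℝ (⊤ : ℕ∞) f) (i : Fin d) :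
    ContDiff ℝ (⊤ : ℕ∞) (pd d i f) :=
  (hf.fderiv_right (m := (⊤ : ℕ∞)) (by simp)).clm_apply contDiff_const

theorem pd_add {d : ℕ} {f g : (Fin d → ℝ) → ℝ} (hf : ContDiff ℝ (⊤ : ℕ∞) f)
    (hg : ContDiff ℝ (⊤ : ℕ∞) g) (i : Fin d) (x : Fin d → ℝ) :
    pd d i (fun y => f y + g y) x = pd d i f x + pd d i g x := by
  unfold pd
  rw [fderiv_fun_add (hf.differentiable (by simp) x) (hg.differentiable (by simp) x)]
  rfl

theorem lap_add {d : ℕ} {f g : (Fin d → ℝ) → ℝ} (hf : ContDiff ℝ (⊤ : ℕ∞) f)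
    (hg : ContDiff ℝ (⊤ : ℕ∞) g) (x : Fin d → ℝ) :
    lap d (fun y => f y + g y) x = lap d f x + lap d g x := by
  unfold lap
  rw [← Finset.sum_add_distrib]
  refine Finset.sum_congr rfl fun i _ => ?_
  have : (fun y => pd d i (fun y => f y + g y) y) = fun y => pd d i f y + pd d i g y :=
    funext fun y => pd_add hf hg i y
  rw [this, pd_add (pd_contDiff hf i) (pd_contDiff hg i)]

theorem pd_mul {d : ℕ} {f g : (Fin d → ℝ) → ℝ} (hf : ContDiff ℝ (⊤ : ℕ∞) f)
    (hg : ContDiff ℝ (⊤ : ℕ∞) g) (i : Fin d) (x : Fin d → ℝ) :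
    pd d i (fun y => f y * g y) x = f x * pd d i g x + g x * pd d i f x := by
  unfold pd
  rw [fderiv_fun_mul (hf.differentiable (by simp) x) (hg.differentiable (by simp) x)]
  simp

theorem pd_cmul {d : ℕ} (c : ℝ) (f : (Fin d → ℝ) → ℝ) (i : Fin d) (x : Fin d → ℝ) :
    pd d i (fun y => c * f y) x = c * pd d i f x := by
  unfold pd
  have : fderiv ℝ (fun y => c * f y) x = c • fderiv ℝ f x := by
    exact congrFun (fderiv_const_smul_field (𝕜 := ℝ) (f := f) c) x
  rw [this]; rfl

theorem lap_cmul {d : ℕ} (c : ℝ) (f : (Fin d → ℝ) → ℝ) (x : Fin d → ℝ) :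
    lap d (fun y => c * f y) x = c * lap d f x := by
  unfold lap
  rw [Finset.mul_sum]
  refine Finset.sum_congr rfl fun i _ => ?_
  have : (fun y => pd d i (fun y => c * f y) y) = fun y => c * pd d i f y :=
    funext fun y => pd_cmul c f i y
  rw [this, pd_cmul]

theorem slice_pd {d : ℕ} {f : ℝ × (Fin d → ℝ) → ℝ} {t : ℝ} {x : Fin d → ℝ}
    (h : DifferentiableAt ℝ f (t, x)) (i : Fin d) :
    pd d i (fun y => f (t, y)) x = fderiv ℝ f (t, x) (0, Pi.single i 1) := by
  have h1 : HasFDerivAt (fun y : Fin d → ℝ => ((t, y) : ℝ × (Fin d → ℝ)))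
      (ContinuousLinearMap.inr ℝ ℝ (Fin d → ℝ)) x := hasFDerivAt_prodMk_right t x
  have h2 : HasFDerivAt (fun y => f (t, y)) ((fderiv ℝ f (t, x)).comp (ContinuousLinearMap.inr ℝ ℝ (Fin d → ℝ))) x :=
    h.hasFDerivAt.comp x h1
  unfold pd
  rw [h2.fderiv]; simp

theorem slice_dt {d : ℕ} {f : ℝ × (Fin d → ℝ) → ℝ} {t : ℝ} {x : Fin d → ℝ}
    (h : DifferentiableAt ℝ f (t, x)) :
    HasDerivAt (fun r => f (r, x)) (fderiv ℝ f (t, x) (1, 0)) t := by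
  have h1 : HasDerivAt (fun r : ℝ => ((r, x) : ℝ × (Fin d → ℝ))) (1, 0) t :=
    (hasDerivAt_id t).prodMk (hasDerivAt_const t x)
  exact h.hasFDerivAt.comp_hasDerivAt t h1

theorem slice_cd {d : ℕ} {f : ℝ × (Fin d → ℝ) → ℝ} {I : Set ℝ} {t : ℝ} (ht : t ∈ I)
    (h : ContDiffOn ℝ (⊤ : ℕ∞) f (I ×ˢ Set.univ)) : ContDiff ℝ (⊤ : ℕ∞) (fun y => f (t, y)) := by
  have h1 : ContDiff ℝ (⊤ : ℕ∞) (fun y : Fin d → ℝ => ((t, y) : ℝ × (Fin d → ℝ))) :=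
    contDiff_const.prodMk contDiff_id
  exact h.comp_contDiff h1 (fun y => ⟨ht, trivial⟩)

theorem pd_per {d : ℕ} {f : (Fin d → ℝ) → ℝ} (hf : PeriodicIn d f) (i : Fin d) :
    PeriodicIn d (pd d i f) := by
  intro x k
  have h : (fun y => f (y + fun i => (k i : ℝ))) = f := funext fun y => hf y k
  unfold pd
  rw [← fderiv_comp_add_right, h]

theorem energy_static {d : ℕ} {f : (Fin d → ℝ) → ℝ} (hf : ContDiff ℝ (⊤ : ℕ∞) f) (hp : PeriodicIn d f)
    {V : Fin d → (Fin d → ℝ) → ℝ} (hV : ∀ i, ContDiff ℝ (⊤ : ℕ∞) (V i)) (hVp : ∀ i, PeriodicIn d (V i))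
    (hdiv : ∀ x, ∑ i, pd d i (V i) x = 0) {ν : ℝ} (hν : 0 < ν) :
    ∫ x in Set.Icc (0 : Fin d → ℝ) 1, 2 * f x * (ν * lap d f x - ∑ i, V i x * pd d i f x) ≤ 0 := by
  have hpd := pd_contDiff hf
  have z1 : ∀ i, ∫ x in Set.Icc (0 : Fin d → ℝ) 1, pd d i (fun y => f y * pd d i f y) x = 0 := fun i =>
    int_pd_zero _ ((hf.mul (hpd i)).of_le (by exact_mod_cast le_top)) (fun x k => by
      have h1 := hp x k
      have h2 := pd_per hp i x k
      simp only [h1, h2]) i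
  have z2 : ∀ i, ∫ x in Set.Icc (0 : Fin d → ℝ) 1, pd d i (fun y => V i y * (f y * f y)) x = 0 := fun i =>
    int_pd_zero _ (((hV i).mul (hf.mul hf)).of_le (by exact_mod_cast le_top)) (fun x k => by
      have h1 := hp x k
      have h2 := hVp i x k
      simp only [h1, h2]) i
  have int : ∀ {g : (Fin d → ℝ) → ℝ}, ContDiff ℝ (⊤ : ℕ∞) g → IntegrableOn g (Set.Icc (0 : Fin d → ℝ) 1) :=
    fun h => h.continuous.integrableOn_Icc
  have e : ∀ x, 2 * f x * (ν * lap d f x - ∑ i, V i x * pd d i f x) =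
      (∑ i, 2 * ν * pd d i (fun y => f y * pd d i f y) x) - (∑ i, pd d i (fun y => V i y * (f y * f y)) x)
      - 2 * ν * ∑ i, pd d i f x ^ 2 := by
    intro x
    have e1 : ∀ i, pd d i (fun y => f y * pd d i f y) x = f x * pd d i (fun y => pd d i f y) x + pd d i f x ^ 2 :=
      fun i => by rw [pd_mul hf (hpd i)]; ring
    have e2 : ∀ i, pd d i (fun y => V i y * (f y * f y)) x = 2 * f x * (V i x * pd d i f x) + f x ^ 2 * pd d i (V i) x :=
      fun i => by rw [pd_mul (hV i) (hf.mul hf), pd_mul hf hf]; ring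
    simp only [e1, e2]
    rw [Finset.sum_add_distrib, ← Finset.mul_sum, ← Finset.mul_sum, ← Finset.mul_sum, hdiv x,
      Finset.sum_add_distrib, ← Finset.mul_sum]
    unfold lap
    ring
  have c1 : ∀ i, ContDiff ℝ (⊤ : ℕ∞) (fun x => 2 * ν * pd d i (fun y => f y * pd d i f y) x) := fun i =>
    contDiff_const.mul (pd_contDiff (hf.mul (hpd i)) i)
  have c2 : ∀ i, ContDiff ℝ (⊤ : ℕ∞) (fun x => pd d i (fun y => V i y * (f y * f y)) x) := fun i =>
    pd_contDiff ((hV i).mul (hf.mul hf)) i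
  have c3 : ContDiff ℝ (⊤ : ℕ∞) (fun x => 2 * ν * ∑ i, pd d i f x ^ 2) :=
    contDiff_const.mul (ContDiff.sum fun i _ => (hpd i).pow 2)
  have s1 : ContDiff ℝ (⊤ : ℕ∞) (fun x => ∑ i, 2 * ν * pd d i (fun y => f y * pd d i f y) x) := ContDiff.sum fun i _ => c1 i
  have s2 : ContDiff ℝ (⊤ : ℕ∞) (fun x => ∑ i, pd d i (fun y => V i y * (f y * f y)) x) := ContDiff.sum fun i _ => c2 i
  have s3 : ContDiff ℝ (⊤ : ℕ∞) (fun x => (∑ i, 2 * ν * pd d i (fun y => f y * pd d i f y) x) -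
    ∑ i, pd d i (fun y => V i y * (f y * f y)) x) := s1.sub s2
  simp only [e]
  rw [integral_sub (int s3) (int c3), integral_sub (int s1) (int s2),
    integral_finsetSum _ (fun i _ => int (c1 i)), integral_finsetSum _ (fun i _ => int (c2 i))]
  simp only [z2, integral_const_mul, z1]
  have : 0 ≤ ∫ x in Set.Icc (0 : Fin d → ℝ) 1, ∑ i, pd d i f x ^ 2 :=
    integral_nonneg fun x => Finset.sum_nonneg fun i _ => sq_nonneg _
  simp
  positivity

theorem energy_mono {d : ℕ} {α β ν : ℝ} (hν : 0 < ν) {θ : ℝ → (Fin d → ℝ) → ℝ}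
    (hs : ContDiffOn ℝ (⊤ : ℕ∞) (fun p : ℝ × (Fin d → ℝ) => θ p.1 p.2) (Set.Ioo α β ×ˢ Set.univ))
    (hp : ∀ t ∈ Set.Ioo α β, PeriodicIn d (θ t))
    {V : ℝ → Fin d → (Fin d → ℝ) → ℝ} (hV : ∀ t ∈ Set.Ioo α β, ∀ i, ContDiff ℝ (⊤ : ℕ∞) (V t i))
    (hVp : ∀ t ∈ Set.Ioo α β, ∀ i, PeriodicIn d (V t i))
    (hdiv : ∀ t ∈ Set.Ioo α β, ∀ x, ∑ i, pd d i (V t i) x = 0)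
    (hpde : ∀ t ∈ Set.Ioo α β, ∀ x, deriv (fun r => θ r x) t - ν * lap d (θ t) x
      + ∑ i, V t i x * pd d i (θ t) x = 0) :
    AntitoneOn (fun t => L2norm d (θ t)) (Set.Ioo α β) := by
  have hop : IsOpen (Set.Ioo α β ×ˢ (Set.univ : Set (Fin d → ℝ))) := isOpen_Ioo.prod isOpen_univ
  have hc : AntitoneOn (fun t => ∫ x in Set.Icc (0 : Fin d → ℝ) 1, θ t x ^ 2) (Set.Ioo α β) := by
    have hD : ∀ t ∈ Set.Ioo α β, HasDerivAt (fun t => ∫ x in Set.Icc (0 : Fin d → ℝ) 1, θ t x ^ 2)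
        (∫ x in Set.Icc (0 : Fin d → ℝ) 1, 2 * θ t x * (ν * lap d (θ t) x - ∑ i, V t i x * pd d i (θ t) x)) t := by
      intro t ht
      have := hasDerivAt_cell (fun p : ℝ × (Fin d → ℝ) => θ p.1 p.2 ^ 2) (Set.Ioo α β) isOpen_Ioo
        ((hs.pow 2).of_le (by exact_mod_cast le_top)) t ht
      refine this.congr_deriv ?_
      congr 1; funext x
      have hd : DifferentiableAt ℝ (fun p : ℝ × (Fin d → ℝ) => θ p.1 p.2) (t, x) :=
        (hs.differentiableOn (by simp)).differentiableAt (hop.mem_nhds ⟨ht, trivial⟩)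
      have h1 := slice_dt (hd.pow 2)
      have h2 := (slice_dt hd).pow 2
      have h3 := (slice_dt hd).deriv
      simp only at h3
      have h4 := hpde t ht x
      rw [h3] at h4
      have h5 := h1.unique h2
      rw [show fderiv ℝ (fun p : ℝ × (Fin d → ℝ) => θ p.1 p.2 ^ 2) (t, x) (1, 0) = _ from h5]
      rw [show ν * lap d (θ t) x - ∑ i, V t i x * pd d i (θ t) x =
        fderiv ℝ (fun p : ℝ × (Fin d → ℝ) => θ p.1 p.2) (t, x) (1, 0) by linarith]
      simp
    refine antitoneOn_of_deriv_nonpos (convex_Ioo α β) (fun t ht => (hD t ht).continuousAt.continuousWithinAt)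
      (fun t ht => ?_) (fun t ht => ?_)
    · rw [interior_Ioo] at ht; exact (hD t ht).differentiableAt.differentiableWithinAt
    · rw [interior_Ioo] at ht
      rw [(hD t ht).deriv]
      exact energy_static (slice_cd ht hs) (hp t ht) (hV t ht) (hVp t ht) (hdiv t ht) hν
  intro a ha b hb hab
  exact Real.sqrt_le_sqrt (hc ha hb hab)

theorem solver_shift {d : ℕ} {κ : ℝ} (hκ : 0 < κ) {U : Fin d → ℝ × (Fin d → ℝ) → ℝ}
    {g : ℝ × (Fin d → ℝ) → ℝ} (hU : ∀ i, SP (U i)) (hg : SP g) (a : ℝ)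
    (hz : ∀ t ≤ a, ∀ x, g (t, x) = 0) :
    ∃ w : ℝ × (Fin d → ℝ) → ℝ, SP w ∧ (∀ t ≤ a, ∀ x, w (t, x) = 0) ∧
      ∀ p, fderiv ℝ w p (1, 0) =
        κ * ∑ i, fderiv ℝ (fun q => fderiv ℝ w q (0, Pi.single i 1)) p (0, Pi.single i 1)
        - ∑ i, fderiv ℝ (fun q => U i q * w q) p (0, Pi.single i 1) + g p := by
  have hsh : ∀ (b : ℝ) {f : ℝ × (Fin d → ℝ) → ℝ}, SP f → SP (fun p => f (p + (b, 0))) := by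
    intro b f hf
    refine ⟨hf.1.comp (contDiff_id.add contDiff_const), fun t x k => ?_⟩
    have := hf.2 (t + b) x k
    simpa using this
  obtain ⟨w, h1, h2, h3⟩ := solver hκ (U := fun i p => U i (p + (a, 0))) (g := fun p => g (p + (a, 0)))
    (fun i => hsh a (hU i)) (hsh a hg) (by
      intro t ht x
      have := hz (t + a) (by linarith) x
      simpa using this)
  refine ⟨fun p => w (p + (-a, 0)), hsh (-a) h1, ?_, ?_⟩
  · intro t ht x
    have := h2 (t + -a) (by linarith) x
    simpa using this
  · intro p
    have h := h3 (p + (-a, 0))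
    have e0 : ∀ q : ℝ × (Fin d → ℝ), q + (-a, 0) + (a, 0) = q := by
      intro q; ext <;> simp
    have e1 : ∀ q, fderiv ℝ (fun p => w (p + (-a, 0))) q = fderiv ℝ w (q + (-a, 0)) := fun q =>
      fderiv_comp_add_right _
    have e2 : ∀ i, fderiv ℝ (fun q => fderiv ℝ w (q + (-a, 0)) (0, Pi.single i 1)) p =
        fderiv ℝ (fun q => fderiv ℝ w q (0, Pi.single i 1)) (p + (-a, 0)) := fun i =>
      fderiv_comp_add_right (f := fun q => fderiv ℝ w q (0, Pi.single i 1)) _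
    have e3 : ∀ i, fderiv ℝ (fun q => U i q * w (q + (-a, 0))) p =
        fderiv ℝ (fun q => U i (q + (a, 0)) * w q) (p + (-a, 0)) := fun i => by
      rw [← fderiv_comp_add_right (f := fun q => U i (q + (a, 0)) * w q)]
      simp only [e0]
    simp only [e1, e2, e3, h, e0]

theorem ext_lemma {d : ℕ} {u : ℝ → (Fin d → ℝ) → (Fin d → ℝ)}
    (hu_smooth : ContDiffOn ℝ (⊤ : ℕ∞) (fun p : ℝ × (Fin d → ℝ) => u p.1 p.2)
      (Set.Ici (0:ℝ) ×ˢ Set.univ))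
    (hu_per : ∀ t ∈ Set.Ici (0:ℝ), ∀ i : Fin d, PeriodicIn d (fun x => u t x i))
    (hu_div : ∀ t ∈ Set.Ici (0:ℝ), ∀ x, ∑ i, pd d i (fun y => u t y i) x = 0)
    {κ T : ℝ} (hκ : 0 < κ) (hT : 0 < T)
    (hRE : ∀ s ≥ (0:ℝ), ∀ θ : ℝ → (Fin d → ℝ) → ℝ,
      ContDiffOn ℝ (⊤ : ℕ∞) (fun p : ℝ × (Fin d → ℝ) => θ p.1 p.2) (Set.Ici s ×ˢ Set.univ) →
      (∀ t ∈ Set.Ici s, PeriodicIn d (θ t)) →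
      (∀ t ∈ Set.Ici s, ∫ x in Set.Icc (0 : Fin d → ℝ) 1, θ t x = 0) →
      (∀ t ∈ Set.Ici s, ∀ x,
        derivWithin (fun r => θ r x) (Set.Ici s) t - κ * lap d (θ t) x
          + ∑ i, u t x i * pd d i (θ t) x = 0) →
      L2norm d (θ (s + T)) ≤ (1/2) * L2norm d (θ s))
    {α β r0 : ℝ} (hα : 0 ≤ α) (hr0 : α < r0) (hβ : r0 + T < β) {η : ℝ → (Fin d → ℝ) → ℝ}
    (hs : ContDiffOn ℝ (⊤ : ℕ∞) (fun p : ℝ × (Fin d → ℝ) => η p.1 p.2) (Set.Ioo α β ×ˢ Set.univ))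
    (hp : ∀ t ∈ Set.Ioo α β, PeriodicIn d (η t))
    (hm : ∀ t ∈ Set.Ioo α β, ∫ x in Set.Icc (0 : Fin d → ℝ) 1, η t x = 0)
    (hpde : ∀ t ∈ Set.Ioo α β, ∀ x, deriv (fun r => η r x) t - κ * lap d (η t) x
      + ∑ i, u t x i * pd d i (η t) x = 0) :
    L2norm d (η (r0 + T)) ≤ (1/2) * L2norm d (η r0) := by
  have hr0p : 0 < r0 := by linarith
  obtain ⟨a, ha⟩ : ∃ a, a = r0 + T := ⟨_, rfl⟩
  obtain ⟨δ, hδ⟩ : ∃ δ, δ = (β - a) / 3 := ⟨_, rfl⟩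
  have hδ0 : 0 < δ := by rw [hδ, ha]; linarith
  have hβ' : a + 3 * δ = β := by rw [hδ]; ring
  -- cutoffs
  obtain ⟨χ, hχs, hχ1, hχ0⟩ : ∃ χ : ℝ → ℝ, ContDiff ℝ (⊤ : ℕ∞) χ ∧ (∀ t ≤ a + δ, χ t = 1) ∧
      ∀ t, a + 2 * δ ≤ t → χ t = 0 := by
    refine ⟨fun t => 1 - Real.smoothTransition ((t - a - δ) / δ), ?_, ?_, ?_⟩
    · exact contDiff_const.sub (Real.smoothTransition.contDiff.comp
        (((contDiff_id.sub contDiff_const).sub contDiff_const).div_const _))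
    · intro t ht
      simp only
      rw [Real.smoothTransition.zero_of_nonpos (div_nonpos_of_nonpos_of_nonneg (by linarith) hδ0.le)]
      simp
    · intro t ht
      simp only
      rw [Real.smoothTransition.one_of_one_le (by rw [le_div_iff₀ hδ0]; linarith)]
      simp
  obtain ⟨ψ, hψs, hψ1, hψ0⟩ : ∃ ψ : ℝ → ℝ, ContDiff ℝ (⊤ : ℕ∞) ψ ∧ (∀ t, r0 ≤ t → ψ t = 1) ∧
      ∀ t ≤ r0 / 2, ψ t = 0 := by
    refine ⟨fun t => Real.smoothTransition ((t - r0 / 2) / (r0 / 2)), ?_, ?_, ?_⟩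
    · exact Real.smoothTransition.contDiff.comp ((contDiff_id.sub contDiff_const).div_const _)
    · intro t ht
      exact Real.smoothTransition.one_of_one_le (by rw [le_div_iff₀ (by positivity)]; linarith)
    · intro t ht
      exact Real.smoothTransition.zero_of_nonpos (div_nonpos_of_nonpos_of_nonneg (by linarith) (by positivity))
  have hχd : ContDiff ℝ (⊤ : ℕ∞) (deriv χ) := by
    have := contDiff_infty_iff_deriv.1 hχs
    exact this.2
  have hχd1 : ∀ t < a + δ, deriv χ t = 0 := fun t ht => by
    have : χ =ᶠ[nhds t] fun _ => 1 := by
      filter_upwards [Iio_mem_nhds ht] with s hs using hχ1 s (le_of_lt hs)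
    rw [this.deriv_eq]; simp
  have hχd0 : ∀ t, a + 2 * δ < t → deriv χ t = 0 := fun t ht => by
    have : χ =ᶠ[nhds t] fun _ => 0 := by
      filter_upwards [Ioi_mem_nhds ht] with s hs using hχ0 s (le_of_lt hs)
    rw [this.deriv_eq]; simp
  have hop : IsOpen (Set.Ioo α β ×ˢ (Set.univ : Set (Fin d → ℝ))) := isOpen_Ioo.prod isOpen_univ
  have hηat : ∀ t ∈ Set.Ioo α β, ∀ x, ContDiffAt ℝ (⊤ : ℕ∞) (fun p : ℝ × (Fin d → ℝ) => η p.1 p.2) (t, x) :=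
    fun t ht x => hs.contDiffAt (hop.mem_nhds ⟨ht, trivial⟩)
  have hfst : ∀ {φ : ℝ → ℝ}, ContDiff ℝ (⊤ : ℕ∞) φ → ContDiff ℝ (⊤ : ℕ∞)
      (fun p : ℝ × (Fin d → ℝ) => φ p.1) := fun h => h.comp contDiff_fst
  -- drift
  set U : Fin d → ℝ × (Fin d → ℝ) → ℝ := fun i p => ψ p.1 * u p.1 p.2 i with hUdef
  have hU : ∀ i, SP (U i) := by
    intro i
    refine ⟨contDiff_iff_contDiffAt.2 fun p => ?_, fun t x k => ?_⟩
    · rcases lt_or_ge p.1 (r0 / 2) with h | h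
      · have : U i =ᶠ[nhds p] fun _ => 0 := by
          filter_upwards [continuous_fst.continuousAt (Iio_mem_nhds h)] with q hq
          simp [hUdef, hψ0 q.1 (le_of_lt hq)]
        exact contDiffAt_const.congr_of_eventuallyEq this
      · have h0 : (0:ℝ) < p.1 := by linarith
        have h1 : ContDiffAt ℝ (⊤ : ℕ∞) (fun p : ℝ × (Fin d → ℝ) => u p.1 p.2) p :=
          hu_smooth.contDiffAt (prod_mem_nhds (Ici_mem_nhds h0) univ_mem)
        exact (hfst hψs).contDiffAt.mul (contDiffAt_pi.1 h1 i)
    · simp only [hUdef]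
      rcases le_total t (r0 / 2) with h | h
      · simp [hψ0 t h]
      · have := hu_per t (show (0:ℝ) ≤ t by linarith) i x k
        simp only at this
        rw [this]
  -- source
  set g : ℝ × (Fin d → ℝ) → ℝ := fun p => - deriv χ p.1 * η p.1 p.2 with hgdef
  have hg : SP g := by
    refine ⟨contDiff_iff_contDiffAt.2 fun p => ?_, fun t x k => ?_⟩
    · rcases lt_or_ge p.1 (a + δ) with h | h
      · have : g =ᶠ[nhds p] fun _ => 0 := by
          filter_upwards [continuous_fst.continuousAt (Iio_mem_nhds h)] with q hq
          simp [hgdef, hχd1 q.1 hq]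
        exact contDiffAt_const.congr_of_eventuallyEq this
      rcases lt_or_ge (a + 2 * δ) p.1 with h' | h'
      · have : g =ᶠ[nhds p] fun _ => 0 := by
          filter_upwards [continuous_fst.continuousAt (Ioi_mem_nhds h')] with q hq
          simp [hgdef, hχd0 q.1 hq]
        exact contDiffAt_const.congr_of_eventuallyEq this
      · exact (hfst hχd).neg.contDiffAt.mul (hηat p.1 ⟨by linarith, by linarith⟩ p.2)
    · simp only [hgdef]
      rcases lt_or_ge t (a + δ) with h | h
      · simp [hχd1 t h]
      rcases lt_or_ge (a + 2 * δ) t with h' | h'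
      · simp [hχd0 t h']
      · rw [hp t ⟨by linarith, by linarith⟩ x k]
  have hgz : ∀ t ≤ a, ∀ x, g (t, x) = 0 := fun t ht x => by
    simp [hgdef, hχd1 t (by linarith)]
  have hgm : ∀ t, ∫ x in Set.Icc (0 : Fin d → ℝ) 1, g (t, x) = 0 := by
    intro t
    simp only [hgdef, integral_const_mul]
    rcases lt_or_ge t (a + δ) with h | h
    · simp [hχd1 t h]
    rcases lt_or_ge (a + 2 * δ) t with h' | h'
    · simp [hχd0 t h']
    · rw [hm t ⟨by linarith, by linarith⟩]; simp
  obtain ⟨w, hw, hw0, hwe⟩ := solver_shift hκ hU hg a hgz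
  have hwd : Differentiable ℝ w := hw.1.differentiable (by simp)
  have hwx : ∀ i, SP (fun q => fderiv ℝ w q (0, Pi.single i 1)) := fun i => hw.fderiv_apply _
  have hUw : ∀ i, SP (fun q => U i q * w q) := fun i =>
    ⟨(hU i).1.mul hw.1, fun t x k => by
      have h1 := (hU i).2 t x k
      have h2 := hw.2 t x k
      simp only at h1 h2 ⊢
      rw [h1, h2]⟩
  have hslice : ∀ {f : ℝ × (Fin d → ℝ) → ℝ}, SP f → ∀ t, ContDiff ℝ (⊤ : ℕ∞) (fun y => f (t, y)) :=
    fun h t => slice_cd (I := Set.univ) trivial h.1.contDiffOn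
  have hint0 : ∀ {f : ℝ × (Fin d → ℝ) → ℝ}, SP f → ∀ t i,
      ∫ x in Set.Icc (0 : Fin d → ℝ) 1, fderiv ℝ f (t, x) (0, Pi.single i 1) = 0 := by
    intro f hf t i
    have := int_pd_zero (fun y => f (t, y)) ((hslice hf t).of_le (by exact_mod_cast le_top)) (hf.2 t) i
    refine Eq.trans ?_ this
    congr 1; funext x
    exact (slice_pd (hf.1.differentiable (by simp) _) i).symm
  have hwm : ∀ t, ∫ x in Set.Icc (0 : Fin d → ℝ) 1, w (t, x) = 0 := by
    have hD : ∀ t, HasDerivAt (fun t => ∫ x in Set.Icc (0 : Fin d → ℝ) 1, w (t, x)) 0 t := by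
      intro t
      refine (hasDerivAt_cell w Set.univ isOpen_univ (hw.1.of_le (by exact_mod_cast le_top)).contDiffOn t
        trivial).congr_deriv ?_
      have int : ∀ {f : ℝ × (Fin d → ℝ) → ℝ}, SP f →
          IntegrableOn (fun x => f (t, x)) (Set.Icc (0 : Fin d → ℝ) 1) :=
        fun h => (hslice h t).continuous.integrableOn_Icc
      have i1 : ∀ i, IntegrableOn (fun x => fderiv ℝ (fun q => fderiv ℝ w q (0, Pi.single i 1)) (t, x)
          (0, Pi.single i 1)) (Set.Icc (0 : Fin d → ℝ) 1) := fun i => int ((hwx i).fderiv_apply _)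
      have i2 : ∀ i, IntegrableOn (fun x => fderiv ℝ (fun q => U i q * w q) (t, x)
          (0, Pi.single i 1)) (Set.Icc (0 : Fin d → ℝ) 1) := fun i => int ((hUw i).fderiv_apply _)
      have j1 : IntegrableOn (fun x => κ * ∑ i, fderiv ℝ (fun q => fderiv ℝ w q (0, Pi.single i 1)) (t, x)
          (0, Pi.single i 1)) (Set.Icc (0 : Fin d → ℝ) 1) :=
        (integrable_finsetSum _ fun i _ => i1 i).const_mul κ
      have j2 : IntegrableOn (fun x => ∑ i, fderiv ℝ (fun q => U i q * w q) (t, x)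
          (0, Pi.single i 1)) (Set.Icc (0 : Fin d → ℝ) 1) :=
        integrable_finsetSum _ fun i _ => i2 i
      have j3 : IntegrableOn (fun x => κ * (∑ i, fderiv ℝ (fun q => fderiv ℝ w q (0, Pi.single i 1)) (t, x)
          (0, Pi.single i 1)) - ∑ i, fderiv ℝ (fun q => U i q * w q) (t, x)
          (0, Pi.single i 1)) (Set.Icc (0 : Fin d → ℝ) 1) := j1.sub j2
      simp only [hwe]
      rw [integral_add j3 (int hg), integral_sub j1 j2, integral_const_mul,
        integral_finsetSum _ (fun i _ => i1 i), integral_finsetSum _ (fun i _ => i2 i), hgm]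
      simp only [hint0 (hwx _), hint0 (hUw _)]
      simp
    intro t
    have hc := is_const_of_deriv_eq_zero (fun t => (hD t).differentiableAt) (fun t => (hD t).deriv) t a
    rw [hc]
    simp [hw0 a le_rfl]
  -- cut-off part
  have hχη : ∀ t, α < t → ∀ x, ContDiffAt ℝ (⊤ : ℕ∞) (fun p : ℝ × (Fin d → ℝ) => χ p.1 * η p.1 p.2) (t, x) := by
    intro t ht x
    rcases lt_or_ge (a + 2 * δ) t with h' | h'
    · have : (fun p : ℝ × (Fin d → ℝ) => χ p.1 * η p.1 p.2) =ᶠ[nhds (t, x)] fun _ => 0 := by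
        filter_upwards [continuous_fst.continuousAt (Ioi_mem_nhds h')] with q hq
        simp [hχ0 q.1 (le_of_lt hq)]
      exact contDiffAt_const.congr_of_eventuallyEq this
    · exact (hfst hχs).contDiffAt.mul (hηat t ⟨ht, by linarith⟩ x)
  have hZpde : ∀ t, α < t → ∀ x, deriv (fun r => χ r * η r x) t - κ * lap d (fun y => χ t * η t y) x
      + ∑ i, u t x i * pd d i (fun y => χ t * η t y) x = - g (t, x) := by
    intro t ht x
    simp only [pd_cmul, lap_cmul, hgdef]
    rcases lt_or_ge (a + 2 * δ) t with h' | h'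
    · have : (fun r => χ r * η r x) =ᶠ[nhds t] fun _ => 0 := by
        filter_upwards [Ioi_mem_nhds h'] with q hq
        simp [hχ0 q (le_of_lt hq)]
      rw [this.deriv_eq]
      simp [hχ0 t h'.le, hχd0 t h']
    · have htm : t ∈ Set.Ioo α β := ⟨ht, by linarith⟩
      have h1 := (slice_dt ((hηat t htm x).differentiableAt (by simp))).differentiableAt
      have h2 : DifferentiableAt ℝ χ t := hχs.differentiable (by simp) t
      rw [show deriv (fun r => χ r * η r x) t = deriv χ t * η t x + χ t * deriv (fun r => η r x) t from
        deriv_fun_mul h2 h1]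
      have h3 := hpde t htm x
      have h4 : ∑ i, u t x i * (χ t * pd d i (η t) x) = χ t * ∑ i, u t x i * pd d i (η t) x := by
        rw [Finset.mul_sum]; exact Finset.sum_congr rfl fun i _ => by ring
      rw [show ∑ i, u t x i * (χ t * pd d i (fun y => η t y) x) = _ from h4]
      linear_combination χ t * h3
  have hwpde : ∀ t, r0 ≤ t → ∀ x, deriv (fun r => w (r, x)) t - κ * lap d (fun y => w (t, y)) x
      + ∑ i, u t x i * pd d i (fun y => w (t, y)) x = g (t, x) := by
    intro t ht x
    rw [(slice_dt (hwd (t, x))).deriv, hwe]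
    have e1 : ∀ i, (fun y => pd d i (fun z => w (t, z)) y) = fun y => fderiv ℝ w (t, y) (0, Pi.single i 1) :=
      fun i => funext fun y => slice_pd (hwd (t, y)) i
    have e2 : lap d (fun y => w (t, y)) x =
        ∑ i, fderiv ℝ (fun q => fderiv ℝ w q (0, Pi.single i 1)) (t, x) (0, Pi.single i 1) := by
      unfold lap
      refine Finset.sum_congr rfl fun i _ => ?_
      rw [e1]
      exact slice_pd (f := fun q => fderiv ℝ w q (0, Pi.single i 1)) ((hwx i).1.differentiable (by simp) _) i
    have hut : ∀ i, ContDiff ℝ (⊤ : ℕ∞) (fun y => u t y i) := fun i =>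
      slice_cd (f := fun p => u p.1 p.2 i) (I := Set.Ici 0) (show (0:ℝ) ≤ t by linarith)
        (contDiffOn_pi.1 hu_smooth i)
    have e3 : ∀ i, fderiv ℝ (fun q => U i q * w q) (t, x) (0, Pi.single i 1) =
        u t x i * pd d i (fun y => w (t, y)) x + w (t, x) * pd d i (fun y => u t y i) x := by
      intro i
      rw [← slice_pd (f := fun q => U i q * w q) ((hUw i).1.differentiable (by simp) _) i]
      simp only [hUdef, hψ1 t ht, one_mul]
      exact pd_mul (hut i) (hslice hw t) i x
    simp only [e2, e3]
    rw [Finset.sum_add_distrib, ← Finset.mul_sum, hu_div t (show (0:ℝ) ≤ t by linarith) x]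
    ring
  have hZs : ∀ t, α < t → ContDiff ℝ (⊤ : ℕ∞) (fun y => χ t * η t y) := fun t ht =>
    slice_cd (f := fun p => χ p.1 * η p.1 p.2) (I := Set.Ioi α) ht
      (fun p hp => (hχη p.1 hp.1 p.2).contDiffWithinAt)
  have hfin := hRE r0 hr0p.le (fun t x => χ t * η t x + w (t, x)) ?_ ?_ ?_ ?_
  · have e1 : ∀ t ≤ a, (fun x => χ t * η t x + w (t, x)) = η t := fun t ht => by
      funext x; rw [hχ1 t (by linarith), hw0 t ht]; ring
    rwa [e1 _ ha.ge, e1 r0 (by linarith)] at hfin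
  · intro q hq
    exact ((hχη q.1 (lt_of_lt_of_le hr0 hq.1) q.2).add hw.1.contDiffAt).contDiffWithinAt
  · intro t ht x k
    have h2 := hw.2 t x k
    simp only at h2 ⊢
    rw [h2]
    rcases lt_or_ge (a + 2 * δ) t with h' | h'
    · simp [hχ0 t h'.le]
    · rw [hp t ⟨lt_of_lt_of_le hr0 ht, by linarith⟩ x k]
  · intro t ht
    rw [integral_add ((hZs t (lt_of_lt_of_le hr0 ht)).continuous.integrableOn_Icc)
      ((hslice hw t).continuous.integrableOn_Icc), hwm, integral_const_mul]
    rcases lt_or_ge (a + 2 * δ) t with h' | h'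
    · simp [hχ0 t h'.le]
    · rw [hm t ⟨lt_of_lt_of_le hr0 ht, by linarith⟩]; simp
  · intro t ht x
    have ht' : α < t := lt_of_lt_of_le hr0 ht
    have d1 : DifferentiableAt ℝ (fun r => χ r * η r x) t :=
      (slice_dt ((hχη t ht' x).differentiableAt (by simp))).differentiableAt
    have d2 : DifferentiableAt ℝ (fun r => w (r, x)) t := (slice_dt (hwd (t, x))).differentiableAt
    rw [(d1.fun_add d2).derivWithin (uniqueDiffOn_Ici r0 t ht)]
    rw [deriv_fun_add d1 d2, lap_add (hZs t ht') (hslice hw t)]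
    simp only [pd_add (hZs t ht') (hslice hw t), mul_add, Finset.sum_add_distrib]
    linear_combination hZpde t ht' x + hwpde t ht x

noncomputable def stair (y : ℝ) : ℝ := ⌊y⌋ + Real.smoothTransition (4 * (y - ⌊y⌋) - 2)

theorem stair_ge (y : ℝ) : (⌊y⌋ : ℝ) ≤ stair y := by
  have := Real.smoothTransition.nonneg (4 * (y - ⌊y⌋) - 2)
  unfold stair; linarith

theorem stair_le (y : ℝ) : stair y ≤ y + 1 := by
  have := Real.smoothTransition.le_one (4 * (y - ⌊y⌋) - 2)
  have := Int.floor_le y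
  unfold stair; linarith

theorem stair_const (n : ℤ) (y : ℝ) (h1 : n - 1 / 4 ≤ y) (h2 : y ≤ n + 1 / 2) : stair y = n := by
  unfold stair
  rcases lt_or_ge y n with h | h
  · have hf : ⌊y⌋ = n - 1 := by
      rw [Int.floor_eq_iff]; push_cast; constructor <;> linarith
    rw [hf, Real.smoothTransition.one_of_one_le (by push_cast; linarith)]
    push_cast; ring
  · have hf : ⌊y⌋ = n := by
      rw [Int.floor_eq_iff]; constructor <;> linarith
    rw [hf, Real.smoothTransition.zero_of_nonpos (by linarith)]
    ring

theorem stair_contDiff : ContDiff ℝ (⊤ : ℕ∞) stair := by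
  refine contDiff_iff_contDiffAt.2 fun y => ?_
  rcases eq_or_lt_of_le (Int.floor_le y) with h | h
  · have : stair =ᶠ[nhds y] fun _ => ((⌊y⌋ : ℤ) : ℝ) := by
      filter_upwards [Ioo_mem_nhds (show y - 1 / 4 < y by linarith) (show y < y + 1 / 2 by linarith)] with z hz
      exact stair_const _ z (by rw [h]; exact hz.1.le) (by rw [h]; exact hz.2.le)
    exact contDiffAt_const.congr_of_eventuallyEq this
  · have : stair =ᶠ[nhds y] fun z => ⌊y⌋ + Real.smoothTransition (4 * (z - ⌊y⌋) - 2) := by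
      filter_upwards [Ioo_mem_nhds h (Int.lt_floor_add_one y)] with z hz
      have hf : ⌊z⌋ = ⌊y⌋ := by
        rw [Int.floor_eq_iff]; exact ⟨hz.1.le, hz.2⟩
      unfold stair; rw [hf]
    refine ContDiffAt.congr_of_eventuallyEq ?_ this
    exact (contDiff_const.add (Real.smoothTransition.contDiff.comp
      ((contDiff_const.mul (contDiff_id.sub contDiff_const)).sub contDiff_const))).contDiffAt

noncomputable def vel (q t : ℝ) : ℝ :=
  (2:ℝ) ^ stair (-Real.logb 2 (1 - t)) * (1 + stair (-Real.logb 2 (1 - t)) ^ 2) ^ (q / 2)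

theorem vel_contDiffOn (q : ℝ) : ContDiffOn ℝ (⊤ : ℕ∞) (vel q) (Set.Iio 1) := by
  have h1 : ContDiffOn ℝ (⊤ : ℕ∞) (fun t : ℝ => stair (-Real.logb 2 (1 - t))) (Set.Iio 1) := by
    refine stair_contDiff.comp_contDiffOn ?_
    refine ContDiffOn.neg ?_
    unfold Real.logb
    refine ContDiffOn.div_const ?_ _
    refine ContDiffOn.log (contDiff_const.sub contDiff_id).contDiffOn ?_
    intro t ht
    have : t < 1 := ht
    simp; linarith
  unfold vel
  refine ContDiffOn.mul ?_ ?_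
  · have : ContDiff ℝ (⊤ : ℕ∞) (fun z : ℝ => (2:ℝ) ^ z) := by
      have e : (fun z : ℝ => (2:ℝ) ^ z) = fun z => Real.exp (Real.log 2 * z) := by
        funext z; rw [Real.rpow_def_of_pos (by norm_num)]
      rw [e]
      exact Real.contDiff_exp.comp (contDiff_const.mul contDiff_id)
    exact this.comp_contDiffOn h1
  · refine ContDiffOn.rpow_const_of_ne (contDiffOn_const.add (h1.pow 2)) ?_
    intro t ht
    positivity

theorem vel_pos (q t : ℝ) : 0 < vel q t := by unfold vel; positivity

theorem two_rpow_logb {t : ℝ} (ht : t < 1) : (2:ℝ) ^ (-Real.logb 2 (1 - t)) = (1 - t)⁻¹ := by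
  rw [Real.rpow_neg (by norm_num), Real.rpow_logb (by norm_num) (by norm_num) (by linarith)]

theorem vel_lower {q t : ℝ} (hq : 0 < q) (ht : t < 1) : 1 / 2 * (1 - t)⁻¹ ≤ vel q t := by
  unfold vel
  set y := -Real.logb 2 (1 - t) with hy
  have h1 : (1:ℝ) ≤ (1 + stair y ^ 2) ^ (q / 2) :=
    Real.one_le_rpow (by nlinarith [sq_nonneg (stair y)]) (by positivity)
  have h2 : (2:ℝ) ^ (y - 1) ≤ (2:ℝ) ^ stair y :=
    Real.rpow_le_rpow_of_exponent_le (by norm_num) (by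
      have := stair_ge y
      have := Int.lt_floor_add_one y
      linarith)
  rw [Real.rpow_sub (by norm_num), hy, two_rpow_logb ht, Real.rpow_one, ← hy] at h2
  have h3 : 0 < (2:ℝ) ^ stair y := by positivity
  nlinarith

theorem vel_upper {q : ℝ} (hq : 0 < q) : ∃ C' > (0:ℝ), ∀ t ∈ Set.Ico (0:ℝ) 1, vel q t ≤
    C' * (|Real.logb 2 (1 - t)| ^ q + 1) / (1 - t) := by
  refine ⟨2 * 2 ^ (q / 2) * 2 ^ q, by positivity, fun t ht => ?_⟩
  have hy0 : 0 ≤ -Real.logb 2 (1 - t) := by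
    have := Real.logb_nonpos (b := 2) (by norm_num) (show 0 ≤ 1 - t by linarith [ht.2]) (by linarith [ht.1])
    linarith
  have habs : |Real.logb 2 (1 - t)| = -Real.logb 2 (1 - t) := abs_of_nonpos (by linarith)
  rw [habs]
  unfold vel
  set y := -Real.logb 2 (1 - t) with hy
  have hz0 : 0 ≤ stair y := by
    have h1 := stair_ge y
    have : (0:ℝ) ≤ ⌊y⌋ := by exact_mod_cast Int.floor_nonneg.2 hy0
    linarith
  have hz1 := stair_le y
  have h1 : (2:ℝ) ^ stair y ≤ 2 * (1 - t)⁻¹ := by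
    calc (2:ℝ) ^ stair y ≤ 2 ^ (y + 1) := Real.rpow_le_rpow_of_exponent_le (by norm_num) hz1
      _ = 2 * (1 - t)⁻¹ := by rw [Real.rpow_add (by norm_num), hy, two_rpow_logb ht.2, Real.rpow_one]; ring
  have h2 : (1 + stair y ^ 2) ^ (q / 2) ≤ 2 ^ (q / 2) * (1 + y) ^ q := by
    calc (1 + stair y ^ 2) ^ (q / 2) ≤ (2 * (1 + y) ^ 2) ^ (q / 2) := by
          refine Real.rpow_le_rpow (by positivity) ?_ (by positivity)
          nlinarith
      _ = 2 ^ (q / 2) * (1 + y) ^ q := by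
          rw [Real.mul_rpow (by norm_num) (by positivity), ← Real.rpow_natCast (1 + y) 2,
            ← Real.rpow_mul (by positivity)]
          congr 2; push_cast; ring
  have h3 : (1 + y) ^ q ≤ 2 ^ q * (y ^ q + 1) := by
    rcases le_total y 1 with h | h
    · calc (1 + y) ^ q ≤ 2 ^ q := Real.rpow_le_rpow (by positivity) (by linarith) hq.le
        _ ≤ _ := by
          have : 0 ≤ y ^ q := by positivity
          have : (0:ℝ) < 2 ^ q := by positivity
          nlinarith
    · calc (1 + y) ^ q ≤ (2 * y) ^ q := Real.rpow_le_rpow (by positivity) (by linarith) hq.le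
        _ = 2 ^ q * y ^ q := Real.mul_rpow (by norm_num) hy0
        _ ≤ _ := by
          have : (0:ℝ) < 2 ^ q := by positivity
          nlinarith
  have ht1 : 0 < 1 - t := by linarith [ht.2]
  calc _ ≤ 2 * (1 - t)⁻¹ * (2 ^ (q / 2) * (2 ^ q * (y ^ q + 1))) := by
        gcongr
        exact h2.trans (by gcongr)
    _ = _ := by field_simp

theorem vel_const (q : ℝ) (n : ℕ) (t : ℝ) (h1 : 1 - 9/8 * (1/2) ^ n ≤ t) (h2 : t ≤ 1 - 3/4 * (1/2) ^ n) :
    vel q t = 2 ^ n * (1 + (n:ℝ) ^ 2) ^ (q / 2) := by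
  have hp : (0:ℝ) < (1/2) ^ n := by positivity
  have ht : 0 < 1 - t := by linarith
  have hs : stair (-Real.logb 2 (1 - t)) = n := by
    have hb : Real.logb 2 ((1/2) ^ n) = -n := by
      rw [Real.logb_pow, one_div, Real.logb_inv, Real.logb_self_eq_one (by norm_num)]; ring
    have := stair_const n (-Real.logb 2 (1 - t)) ?_ ?_
    · exact_mod_cast this
    · have h : Real.logb 2 (1 - t) ≤ Real.logb 2 (9/8 * (1/2) ^ n) :=
        Real.logb_le_logb_of_le (by norm_num) ht (by linarith)
      rw [Real.logb_mul (by norm_num) hp.ne', hb] at h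
      have h3 : Real.logb 2 (9/8) ≤ 1/4 := by
        have : 4 * Real.logb 2 (9/8) ≤ 1 := by
          have e : Real.logb 2 ((9/8) ^ 4) = 4 * Real.logb 2 (9/8) := by
            rw [Real.logb_pow]; norm_num
          rw [← e, ← Real.logb_self_eq_one (b := 2) (by norm_num)]
          exact Real.logb_le_logb_of_le (by norm_num) (by norm_num) (by norm_num)
        linarith
      push_cast
      linarith
    · have h : Real.logb 2 (3/4 * (1/2) ^ n) ≤ Real.logb 2 (1 - t) :=
        Real.logb_le_logb_of_le (by norm_num) (by positivity) (by linarith)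
      rw [Real.logb_mul (by norm_num) hp.ne', hb] at h
      have h3 : -(1/2) ≤ Real.logb 2 (3/4) := by
        have : -1 ≤ 2 * Real.logb 2 (3/4) := by
          have e : Real.logb 2 ((3/4) ^ 2) = 2 * Real.logb 2 (3/4) := by
            rw [Real.logb_pow]; norm_num
          have e2 : Real.logb 2 (1/2) = -1 := by
            rw [one_div, Real.logb_inv, Real.logb_self_eq_one (by norm_num)]
          rw [← e, ← e2]
          exact Real.logb_le_logb_of_le (by norm_num) (by norm_num) (by norm_num)
        linarith
      push_cast
      linarith
  unfold vel
  rw [hs, Real.rpow_natCast]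

noncomputable def sig (q t : ℝ) : ℝ := ∫ r in (0:ℝ)..t, vel q r

theorem sig_hasDerivAt (q : ℝ) {t : ℝ} (ht : t < 1) : HasDerivAt (sig q) (vel q t) t := by
  have hc : ContinuousOn (vel q) (Set.Iio 1) := (vel_contDiffOn q).continuousOn
  have hsub : Set.uIcc 0 t ⊆ Set.Iio 1 := by
    intro r hr
    have := hr.2
    exact lt_of_le_of_lt this (max_lt one_pos ht)
  refine intervalIntegral.integral_hasDerivAt_right ((hc.mono hsub).intervalIntegrable) ?_ ?_
  · exact hc.stronglyMeasurableAtFilter isOpen_Iio t ht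
  · exact hc.continuousAt (Iio_mem_nhds ht)

theorem sig_zero (q : ℝ) : sig q 0 = 0 := by simp [sig]

theorem sig_contDiffOn (q : ℝ) : ContDiffOn ℝ (⊤ : ℕ∞) (sig q) (Set.Ico 0 1) := by
  have : ContDiffOn ℝ (⊤ : ℕ∞) (sig q) (Set.Iio 1) := by
    refine (contDiffOn_infty_iff_deriv_of_isOpen isOpen_Iio).2 ⟨fun t ht =>
      (sig_hasDerivAt q ht).differentiableAt.differentiableWithinAt, ?_⟩
    exact (vel_contDiffOn q).congr fun t ht => (sig_hasDerivAt q ht).deriv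
  exact this.mono fun t ht => ht.2

theorem sig_strictMono (q : ℝ) : StrictMonoOn (sig q) (Set.Iio 1) := by
  refine strictMonoOn_of_deriv_pos (convex_Iio 1) (fun t ht =>
    (sig_hasDerivAt q ht).continuousAt.continuousWithinAt) (fun t ht => ?_)
  rw [interior_Iio] at ht
  rw [(sig_hasDerivAt q ht).deriv]
  exact vel_pos q t

theorem sig_nonneg (q : ℝ) {t : ℝ} (h0 : 0 ≤ t) (ht : t < 1) : 0 ≤ sig q t := by
  rw [← sig_zero q]
  exact (sig_strictMono q).monotoneOn (show (0:ℝ) < 1 by norm_num) ht h0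

theorem sig_lower {q : ℝ} (hq : 0 < q) {t : ℝ} (h0 : 0 ≤ t) (ht : t < 1) :
    - (1 / 2 * Real.log (1 - t)) ≤ sig q t := by
  have hD : ∀ r < 1, HasDerivAt (fun r => sig q r + 1 / 2 * Real.log (1 - r))
      (vel q r + 1 / 2 * (-1 / (1 - r))) r := by
    intro r hr
    have h1 : HasDerivAt (fun r : ℝ => 1 - r) (-1) r := by
      simpa using (hasDerivAt_id r).const_sub 1
    exact (sig_hasDerivAt q hr).add ((h1.log (by linarith)).const_mul (1/2))
  have hm : MonotoneOn (fun r => sig q r + 1 / 2 * Real.log (1 - r)) (Set.Iio 1) := by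
    refine monotoneOn_of_deriv_nonneg (convex_Iio 1) (fun r hr =>
      (hD r hr).continuousAt.continuousWithinAt) (fun r hr => ?_) (fun r hr => ?_)
    · rw [interior_Iio] at hr; exact (hD r hr).differentiableAt.differentiableWithinAt
    · rw [interior_Iio] at hr
      rw [(hD r hr).deriv]
      have := vel_lower hq hr
      rw [show 1 / 2 * (-1 / (1 - r)) = - (1 / 2 * (1 - r)⁻¹) by ring]
      linarith
  have := hm (show (0:ℝ) < 1 by norm_num) ht h0
  simp [sig_zero] at this
  linarith

theorem sig_bijOn {q : ℝ} (hq : 0 < q) : Set.BijOn (sig q) (Set.Ico 0 1) (Set.Ici 0) := by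
  refine ⟨fun t ht => sig_nonneg q ht.1 ht.2, ((sig_strictMono q).mono fun t ht => ht.2).injOn, ?_⟩
  intro y hy
  have hy' : (0:ℝ) ≤ y := hy
  set b := 1 - Real.exp (-(2 * y)) with hb
  have he : Real.exp (-(2 * y)) ≤ 1 := Real.exp_le_one_iff.2 (by linarith)
  have hb0 : 0 ≤ b := by linarith
  have hb1 : b < 1 := by have := Real.exp_pos (-(2*y)); linarith
  have h1 : y ≤ sig q b := by
    have := sig_lower hq hb0 hb1
    rw [show 1 - b = Real.exp (-(2 * y)) by rw [hb]; ring, Real.log_exp] at this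
    linarith
  have hc : ContinuousOn (sig q) (Set.Icc 0 b) := fun t ht =>
    (sig_hasDerivAt q (lt_of_le_of_lt ht.2 hb1)).continuousAt.continuousWithinAt
  obtain ⟨t, ht, e⟩ := intermediate_value_Icc hb0 hc (show y ∈ Set.Icc (sig q 0) (sig q b) from
    ⟨by rw [sig_zero]; exact hy', h1⟩)
  exact ⟨t, ⟨ht.1, lt_of_le_of_lt ht.2 hb1⟩, e⟩

theorem sig_affine (q : ℝ) (n : ℕ) (t : ℝ) (h1 : 1 - 9/8 * (1/2) ^ n ≤ t) (h2 : t ≤ 1 - 3/4 * (1/2) ^ n) :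
    sig q t = sig q (1 - (1/2) ^ n) + 2 ^ n * (1 + (n:ℝ) ^ 2) ^ (q / 2) * (t - (1 - (1/2) ^ n)) := by
  have hp : (0:ℝ) < (1/2) ^ n := by positivity
  set A := 2 ^ n * (1 + (n:ℝ) ^ 2) ^ (q / 2) with hA
  have hlt : ∀ r ∈ Set.Icc (1 - 9/8 * (1/2) ^ n) (1 - 3/4 * (1/2:ℝ) ^ n), r < 1 := fun r hr => by
    have := hr.2; linarith
  have hD : ∀ r ∈ Set.Icc (1 - 9/8 * (1/2) ^ n) (1 - 3/4 * (1/2:ℝ) ^ n),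
      HasDerivAt (fun r => sig q r - A * r) 0 r := by
    intro r hr
    refine ((sig_hasDerivAt q (hlt r hr)).sub ((hasDerivAt_id r).const_mul A)).congr_deriv ?_
    rw [vel_const q n r hr.1 hr.2]; simp [hA]
  have hcst : ∀ r ∈ Set.Icc (1 - 9/8 * (1/2) ^ n) (1 - 3/4 * (1/2:ℝ) ^ n),
      sig q r - A * r = sig q (1 - 9/8 * (1/2) ^ n) - A * (1 - 9/8 * (1/2) ^ n) :=
    constant_of_has_deriv_right_zero (fun r hr => (hD r hr).continuousAt.continuousWithinAt)
      (fun r hr => (hD r ⟨hr.1, hr.2.le⟩).hasDerivWithinAt)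
  have e1 := hcst t ⟨h1, h2⟩
  have e2 := hcst (1 - (1/2) ^ n) ⟨by linarith, by linarith⟩
  linarith

theorem tau_small {τ : ℝ → ℝ} {C p : ℝ} (hC : 0 < C) (hp : 0 < p)
    (hτ_log : ∀ ν : ℝ, 0 < ν → ν ≤ 1 / C → τ ν ≤ C * |Real.log ν| ^ ((2:ℝ)/p)) {ν : ℝ} (hν : 0 < ν) :
    ∀ᶠ n : ℕ in atTop, τ (ν / (2 ^ n * (1 + (n:ℝ) ^ 2) ^ ((2 + 2 / p) / 2))) <
      1 / 4 * (1 + (n:ℝ) ^ 2) ^ ((2 + 2 / p) / 2) := by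
  set q := 2 + 2 / p with hq
  have hm : 0 < 2 / p := by positivity
  have hq0 : 0 < q := by positivity
  set K := |Real.log ν| + 1 + q with hK
  have hK0 : 0 ≤ K := by positivity
  have h2 : Tendsto (fun n : ℕ => (2:ℝ) ^ n) atTop atTop := tendsto_pow_atTop_atTop_of_one_lt (by norm_num)
  have h3 : Tendsto (fun n : ℕ => (n:ℝ)) atTop atTop := tendsto_natCast_atTop_atTop
  filter_upwards [h2.eventually_ge_atTop (ν * C), h3.eventually_gt_atTop (4 * (C * K ^ (2 / p)) + 1)] with n hn1 hn2
  have hn3 : (1:ℝ) ≤ n := by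
    have : 0 ≤ 4 * (C * K ^ (2 / p)) := by positivity
    linarith
  set B := (1 + (n:ℝ) ^ 2) ^ (q / 2) with hB
  have hB1 : 1 ≤ B := Real.one_le_rpow (by nlinarith) (by positivity)
  have hA : 0 < 2 ^ n * B := by positivity
  have hle : ν / (2 ^ n * B) ≤ 1 / C := by
    rw [div_le_div_iff₀ hA hC]
    have : (0:ℝ) < 2 ^ n := by positivity
    nlinarith
  have hlog : |Real.log (ν / (2 ^ n * B))| ≤ K * n := by
    rw [Real.log_div hν.ne' hA.ne', Real.log_mul (by positivity) (by positivity), Real.log_pow, hB,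
      Real.log_rpow (by positivity)]
    have l1 : 0 ≤ Real.log 2 := Real.log_nonneg (by norm_num)
    have l2 : Real.log 2 ≤ 1 := by
      have := Real.log_le_sub_one_of_pos (show (0:ℝ) < 2 by norm_num); linarith
    have l3 : 0 ≤ Real.log (1 + (n:ℝ) ^ 2) := Real.log_nonneg (by nlinarith)
    have l4 : Real.log (1 + (n:ℝ) ^ 2) ≤ 2 * n := by
      calc Real.log (1 + (n:ℝ) ^ 2) ≤ Real.log ((1 + n) ^ 2) := Real.log_le_log (by positivity) (by nlinarith)
        _ = 2 * Real.log (1 + n) := by rw [Real.log_pow]; norm_num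
        _ ≤ 2 * n := by
          have := Real.log_le_sub_one_of_pos (show (0:ℝ) < 1 + n by positivity); linarith
    have l5 : |Real.log ν| ≤ |Real.log ν| * n := le_mul_of_one_le_right (abs_nonneg _) hn3
    have l6 : q / 2 * Real.log (1 + (n:ℝ) ^ 2) ≤ q * n := by nlinarith
    have l7 : 0 ≤ q / 2 * Real.log (1 + (n:ℝ) ^ 2) := by positivity
    have l8 : n * Real.log 2 ≤ n := by nlinarith
    have l9 : 0 ≤ n * Real.log 2 := by positivity
    rw [hK]
    calc _ ≤ |Real.log ν| + |n * Real.log 2 + q / 2 * Real.log (1 + (n:ℝ) ^ 2)| := abs_sub _ _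
      _ = |Real.log ν| + (n * Real.log 2 + q / 2 * Real.log (1 + (n:ℝ) ^ 2)) := by
        rw [abs_of_nonneg (add_nonneg l9 l7)]
      _ ≤ _ := by linarith
  have hBlow : (n:ℝ) * (n:ℝ) ^ (2 / p) ≤ B := by
    calc (n:ℝ) * (n:ℝ) ^ (2 / p) ≤ (n:ℝ) ^ (2:ℝ) * (n:ℝ) ^ (2 / p) := by
          gcongr
          rw [show (2:ℝ) = ((2:ℕ):ℝ) by norm_num, Real.rpow_natCast]
          nlinarith
      _ = ((n:ℝ) ^ 2) ^ (q / 2) := by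
          rw [← Real.rpow_add (by linarith), ← Real.rpow_natCast, ← Real.rpow_mul (by linarith)]
          congr 1; push_cast; rw [hq]; ring
      _ ≤ B := Real.rpow_le_rpow (by positivity) (by linarith) (by positivity)
  have hnm : (0:ℝ) < (n:ℝ) ^ (2 / p) := by positivity
  calc τ (ν / (2 ^ n * B)) ≤ C * |Real.log (ν / (2 ^ n * B))| ^ ((2:ℝ)/p) := hτ_log _ (by positivity) hle
    _ ≤ C * (K * n) ^ (2 / p) := by gcongr
    _ = C * K ^ (2 / p) * (n:ℝ) ^ (2 / p) := by rw [Real.mul_rpow hK0 (by linarith)]; ring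
    _ < 1 / 4 * ((n:ℝ) * (n:ℝ) ^ (2 / p)) := by nlinarith
    _ ≤ 1 / 4 * B := by linarith

theorem tendsto_of_halving {L : ℝ → ℝ} {s : ℝ} (hL : ∀ t, 0 ≤ L t) (hs : s < 1) (hanti : AntitoneOn L (Set.Ioo s 1)) {N : ℕ}
    (hN : ∀ n ≥ N, s < 1 - (1/2 : ℝ) ^ n)
    (hhalf : ∀ n ≥ N, L (1 - (1/2) ^ (n + 1)) ≤ 1 / 2 * L (1 - (1/2) ^ n)) :
    Tendsto L (nhdsWithin 1 (Set.Iio 1)) (nhds 0) := by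
  have hgeo : ∀ m : ℕ, L (1 - (1/2) ^ (N + m)) ≤ (1/2) ^ m * L (1 - (1/2) ^ N) := by
    intro m
    induction m with
    | zero => simp
    | succ m ih =>
      have := hhalf (N + m) (by omega)
      rw [← add_assoc, show (1/2:ℝ)^(m+1) = (1/2)^m * (1/2) from pow_succ _ _]
      linarith
  rw [Metric.tendsto_nhds]
  intro ε hε
  have ht : Tendsto (fun m : ℕ => (1/2 : ℝ) ^ m * L (1 - (1/2) ^ N)) atTop (nhds 0) := by
    simpa using (tendsto_pow_atTop_nhds_zero_of_lt_one (r := (1/2:ℝ)) (by norm_num) (by norm_num)).mul_const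
      (L (1 - (1/2) ^ N))
  obtain ⟨m, hm⟩ := (ht.eventually_lt_const hε).exists
  have hp : (0:ℝ) < (1/2) ^ (N + m) := by positivity
  have hsm := hN (N + m) (by omega)
  filter_upwards [Ioo_mem_nhdsLT (show 1 - (1/2 : ℝ) ^ (N + m) < 1 by linarith)] with t ht
  rw [Real.dist_eq, sub_zero, abs_of_nonneg (hL t)]
  have := hanti ⟨hsm, by linarith⟩ ⟨hsm.trans ht.1, ht.2⟩ ht.1.le
  linarith [hgeo m]

theorem main_aux
    (d : ℕ)
    (u : ℝ → (Fin d → ℝ) → (Fin d → ℝ))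
    (hu_smooth : ContDiffOn ℝ (⊤ : ℕ∞) (fun p : ℝ × (Fin d → ℝ) => u p.1 p.2)
      (Set.Ici (0:ℝ) ×ˢ Set.univ))
    (hu_per : ∀ t ∈ Set.Ici (0:ℝ), ∀ i : Fin d, PeriodicIn d (fun x => u t x i))
    (hu_div : ∀ t ∈ Set.Ici (0:ℝ), ∀ x, ∑ i, pd d i (fun y => u t y i) x = 0)
    (τ : ℝ → ℝ) (hτ_pos : ∀ ν > (0:ℝ), 0 < τ ν)
    (C p : ℝ) (hC : 0 < C) (hp : 0 < p)
    (hτ_log : ∀ ν : ℝ, 0 < ν → ν ≤ 1 / C → τ ν ≤ C * |Real.log ν| ^ ((2:ℝ)/p))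
    (hRE : ∀ ν > (0:ℝ), ∀ s ≥ (0:ℝ), ∀ θ : ℝ → (Fin d → ℝ) → ℝ,
      ContDiffOn ℝ (⊤ : ℕ∞) (fun p : ℝ × (Fin d → ℝ) => θ p.1 p.2) (Set.Ici s ×ˢ Set.univ) →
      (∀ t ∈ Set.Ici s, PeriodicIn d (θ t)) →
      (∀ t ∈ Set.Ici s, ∫ x in Set.Icc (0 : Fin d → ℝ) 1, θ t x = 0) →
      (∀ t ∈ Set.Ici s, ∀ x,
        derivWithin (fun r => θ r x) (Set.Ici s) t - ν * lap d (θ t) x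
          + ∑ i, u t x i * pd d i (θ t) x = 0) →
      L2norm d (θ (s + τ ν)) ≤ (1/2) * L2norm d (θ s))
    (ν : ℝ) (hν : 0 < ν) (s : ℝ) (hs0 : 0 ≤ s) (hs1 : s < 1) (θ : ℝ → (Fin d → ℝ) → ℝ)
    (hθs : ContDiffOn ℝ (⊤ : ℕ∞) (fun p : ℝ × (Fin d → ℝ) => θ p.1 p.2) (Set.Ioo s 1 ×ˢ Set.univ))
    (hθp : ∀ t ∈ Set.Ioo s 1, PeriodicIn d (θ t))
    (hθm : ∀ t ∈ Set.Ioo s 1, ∫ x in Set.Icc (0 : Fin d → ℝ) 1, θ t x = 0)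
    (hpde : ∀ t ∈ Set.Ioo s 1, ∀ x, deriv (fun r => θ r x) t - ν * lap d (θ t) x
      + ∑ i, (vel (2 + 2 / p) t * u (sig (2 + 2 / p) t) x i) * pd d i (θ t) x = 0) :
    Tendsto (fun t => L2norm d (θ t)) (nhdsWithin 1 (Set.Iio 1)) (nhds 0) := by
  set q := 2 + 2 / p with hq
  have hσ0 : ∀ t ∈ Set.Ioo s 1, 0 ≤ sig q t := fun t ht => sig_nonneg q (hs0.trans ht.1.le) ht.2
  have hut : ∀ r, 0 ≤ r → ∀ i, ContDiff ℝ (⊤ : ℕ∞) (fun y => u r y i) := fun r hr i =>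
    slice_cd (f := fun p => u p.1 p.2 i) (I := Set.Ici 0) hr (contDiffOn_pi.1 hu_smooth i)
  have hanti : AntitoneOn (fun t => L2norm d (θ t)) (Set.Ioo s 1) := by
    refine energy_mono hν hθs hθp (V := fun t i x => vel q t * u (sig q t) x i)
      (fun t ht i => contDiff_const.mul (hut _ (hσ0 t ht) i)) (fun t ht i x k => ?_) (fun t ht x => ?_) hpde
    · have := hu_per _ (hσ0 t ht) i x k
      simp only at this ⊢
      rw [this]
    · simp only [pd_cmul]
      rw [← Finset.mul_sum, hu_div _ (hσ0 t ht)]; simp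
  have hpow : Tendsto (fun n : ℕ => 9/8 * (1/2:ℝ) ^ n) atTop (nhds 0) := by
    simpa using (tendsto_pow_atTop_nhds_zero_of_lt_one (r := (1/2:ℝ)) (by norm_num) (by norm_num)).const_mul (9/8)
  obtain ⟨N, hN⟩ := eventually_atTop.1 ((tau_small hC hp hτ_log hν).and
    (hpow.eventually_lt_const (show 0 < 1 - s by linarith)))
  refine tendsto_of_halving (fun t => Real.sqrt_nonneg _) hs1 hanti (N := N) (fun n hn => ?_) (fun n hn => ?_)
  · have := (hN n hn).2
    have : (0:ℝ) < (1/2) ^ n := by positivity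
    linarith
  obtain ⟨hn1, hn2⟩ := hN n hn
  rw [← hq] at hn1
  have hP : (0:ℝ) < (1/2) ^ n := by positivity
  set P := (1/2:ℝ) ^ n with hPdef
  set B := (1 + (n:ℝ) ^ 2) ^ (q / 2) with hB
  set A := 2 ^ n * B with hA
  have hB0 : 0 < B := by positivity
  have hA0 : 0 < A := by positivity
  have hAP : A * P = B := by
    rw [hA, hPdef, mul_right_comm, ← mul_pow]; norm_num
  set T := τ (ν / A) with hTdef
  have hT0 : 0 < T := hτ_pos _ (by positivity)
  set r0 := sig q (1 - P) with hr0
  have haff : ∀ t, 1 - 9/8 * P ≤ t → t ≤ 1 - 3/4 * P → sig q t = r0 + A * (t - (1 - P)) := fun t h1 h2 =>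
    sig_affine q n t h1 h2
  have hvel : ∀ t, 1 - 9/8 * P ≤ t → t ≤ 1 - 3/4 * P → vel q t = A := fun t h1 h2 =>
    vel_const q n t h1 h2
  have hα := haff (1 - 9/8 * P) le_rfl (by linarith)
  have hα0 : 0 ≤ r0 - 1/8 * B := by
    have := sig_nonneg q (show 0 ≤ 1 - 9/8 * P by linarith) (by linarith)
    rw [hα] at this
    linarith
  -- change of variables
  have hcv : ∀ r ∈ Set.Ioo (r0 - 1/8 * B) (r0 + 1/4 * B),
      1 - 9/8 * P < 1 - P + (r - r0) / A ∧ 1 - P + (r - r0) / A < 1 - 3/4 * P := by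
    intro r hr
    have h1 : - (1/8 * P) < (r - r0) / A := by
      rw [lt_div_iff₀ hA0]; linarith [hr.1]
    have h2 : (r - r0) / A < 1/4 * P := by
      rw [div_lt_iff₀ hA0]; linarith [hr.2]
    constructor <;> linarith
  have hmem : ∀ r ∈ Set.Ioo (r0 - 1/8 * B) (r0 + 1/4 * B), 1 - P + (r - r0) / A ∈ Set.Ioo s 1 := fun r hr =>
    ⟨by linarith [(hcv r hr).1], by linarith [(hcv r hr).2]⟩
  have hmap : ContDiff ℝ (⊤ : ℕ∞) (fun z : ℝ × (Fin d → ℝ) => ((1 - P + (z.1 - r0) / A, z.2) : ℝ × (Fin d → ℝ))) :=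
    (contDiff_const.add ((contDiff_fst.sub contDiff_const).div_const _)).prodMk contDiff_snd
  have key := ext_lemma hu_smooth hu_per hu_div (κ := ν / A) (T := T) (by positivity) hT0
    (hRE (ν / A) (by positivity)) (α := r0 - 1/8 * B) (β := r0 + 1/4 * B) (r0 := r0) hα0 (by linarith)
    (by linarith) (η := fun r x => θ (1 - P + (r - r0) / A) x)
    (hθs.comp hmap.contDiffOn (fun z hz => ⟨hmem z.1 hz.1, trivial⟩))
    (fun r hr => hθp _ (hmem r hr)) (fun r hr => hθm _ (hmem r hr)) (by
      intro r hr x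
      set t := 1 - P + (r - r0) / A with ht
      obtain ⟨h1, h2⟩ := hcv r hr
      have htm := hmem r hr
      have hsg : sig q t = r := by
        rw [haff t h1.le h2.le, ht]; field_simp; ring
      have hop : IsOpen (Set.Ioo s 1 ×ˢ (Set.univ : Set (Fin d → ℝ))) := isOpen_Ioo.prod isOpen_univ
      have hd : DifferentiableAt ℝ (fun p : ℝ × (Fin d → ℝ) => θ p.1 p.2) (t, x) :=
        (hθs.differentiableOn (by simp)).differentiableAt (hop.mem_nhds ⟨htm, trivial⟩)
      have hd1 : HasDerivAt (fun r => θ r x) (deriv (fun r => θ r x) t) t := (slice_dt hd).differentiableAt.hasDerivAt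
      have hd2 : HasDerivAt (fun r => 1 - P + (r - r0) / A) (1 / A) r :=
        (((hasDerivAt_id r).sub_const r0).div_const A).const_add _
      have hd3 : HasDerivAt (fun r => θ (1 - P + (r - r0) / A) x) (deriv (fun r => θ r x) t * (1 / A)) r :=
        HasDerivAt.comp (h₂ := fun r => θ r x) (h := fun r => 1 - P + (r - r0) / A) r hd1 hd2
      rw [hd3.deriv]
      have h := hpde t htm x
      rw [hvel t h1.le h2.le, hsg] at h
      have e : ∑ i, A * u r x i * pd d i (θ t) x = A * ∑ i, u r x i * pd d i (θ t) x := by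
        rw [Finset.mul_sum]; exact Finset.sum_congr rfl fun i _ => by ring
      rw [e] at h
      have : deriv (fun r => θ r x) t * (1 / A) - ν / A * lap d (θ t) x + ∑ i, u r x i * pd d i (θ t) x
        = (1 / A) * (deriv (fun r => θ r x) t - ν * lap d (θ t) x + A * ∑ i, u r x i * pd d i (θ t) x) := by
        field_simp
      rw [this, h, mul_zero])
  simp only [add_sub_cancel_left, sub_self, zero_div, add_zero] at key
  have hend : r0 + T ∈ Set.Ioo (r0 - 1/8 * B) (r0 + 1/4 * B) := ⟨by linarith, by linarith⟩
  have hcvT := hcv _ hend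
  have hmT := hmem _ hend
  simp only [add_sub_cancel_left] at hcvT hmT
  have hPs : (1/2:ℝ) ^ (n+1) = 1/2 * P := by rw [pow_succ, hPdef]; ring
  refine le_trans (hanti hmT ⟨?_, ?_⟩ ?_) key
  · rw [hPs]; linarith
  · rw [hPs]; linarith
  · rw [hPs]; linarith [hcvT.2]

/-- For flows whose dissipation time satisfies a logarithmic bound (e.g. exponentially
mixing flows), the accelerating diffeomorphism can be chosen with an explicit
polynomial-logarithmic derivative bound. -/
theorem accelerated_total_dissipation_exponential_mixing_bound
    (d : ℕ) (hd : 1 ≤ d)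
    (u : ℝ → (Fin d → ℝ) → (Fin d → ℝ))
    (hu_smooth : ContDiffOn ℝ (⊤ : ℕ∞) (fun p : ℝ × (Fin d → ℝ) => u p.1 p.2)
      (Set.Ici (0:ℝ) ×ˢ Set.univ))
    (hu_per : ∀ t ∈ Set.Ici (0:ℝ), ∀ i : Fin d, PeriodicIn d (fun x => u t x i))
    (hu_bdd : ∀ T > (0:ℝ), ∃ M : ℝ, ∀ t ∈ Set.Icc (0:ℝ) T, ∀ x, ‖u t x‖ ≤ M)
    (hu_div : ∀ t ∈ Set.Ici (0:ℝ), ∀ x, ∑ i, pd d i (fun y => u t y i) x = 0)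
    (τ : ℝ → ℝ) (hτ_pos : ∀ ν > (0:ℝ), 0 < τ ν)
    (C p : ℝ) (hC : 0 < C) (hp : 0 < p)
    (hτ_log : ∀ ν : ℝ, 0 < ν → ν ≤ 1 / C → τ ν ≤ C * |Real.log ν| ^ ((2:ℝ)/p))
    (hRE : ∀ ν > (0:ℝ), ∀ s ≥ (0:ℝ), ∀ θ : ℝ → (Fin d → ℝ) → ℝ,
      ContDiffOn ℝ (⊤ : ℕ∞) (fun p : ℝ × (Fin d → ℝ) => θ p.1 p.2) (Set.Ici s ×ˢ Set.univ) →
      (∀ t ∈ Set.Ici s, PeriodicIn d (θ t)) →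
      (∀ t ∈ Set.Ici s, ∫ x in Set.Icc (0 : Fin d → ℝ) 1, θ t x = 0) →
      (∀ t ∈ Set.Ici s, ∀ x,
        derivWithin (fun r => θ r x) (Set.Ici s) t - ν * lap d (θ t) x
          + ∑ i, u t x i * pd d i (θ t) x = 0) →
      L2norm d (θ (s + τ ν)) ≤ (1/2) * L2norm d (θ s)) :
    ∃ σ : ℝ → ℝ,
      ContDiffOn ℝ (⊤ : ℕ∞) σ (Set.Ico 0 1) ∧
      StrictMonoOn σ (Set.Ico 0 1) ∧
      Set.BijOn σ (Set.Ico 0 1) (Set.Ici 0) ∧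
      (∃ C' > (0:ℝ), ∀ t ∈ Set.Ico (0:ℝ) 1, deriv σ t ≤
        C' * (|Real.logb 2 (1 - t)| ^ (2 + (2:ℝ)/p) + 1) / (1 - t)) ∧
      ∀ ν > (0:ℝ), ∀ s ∈ Set.Ico (0:ℝ) 1, ∀ θ : ℝ → (Fin d → ℝ) → ℝ,
        ContDiffOn ℝ (⊤ : ℕ∞) (fun p : ℝ × (Fin d → ℝ) => θ p.1 p.2) (Set.Ico s 1 ×ˢ Set.univ) →
        (∀ t ∈ Set.Ico s 1, PeriodicIn d (θ t)) →
        (∀ t ∈ Set.Ico s 1, ∫ x in Set.Icc (0 : Fin d → ℝ) 1, θ t x = 0) →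
        (∀ t ∈ Set.Ico s 1, ∀ x,
          derivWithin (fun r => θ r x) (Set.Ico s 1) t - ν * lap d (θ t) x
            + ∑ i, (deriv σ t * u (σ t) x i) * pd d i (θ t) x = 0) →
        Tendsto (fun t => L2norm d (θ t)) (nhdsWithin 1 (Set.Iio 1)) (nhds 0) := by
  refine ⟨sig (2 + 2 / p), sig_contDiffOn _, (sig_strictMono _).mono (fun t ht => ht.2),
    sig_bijOn (by positivity), ?_, ?_⟩
  · obtain ⟨C', hC', h⟩ := vel_upper (q := 2 + 2 / p) (by positivity)
    refine ⟨C', hC', fun t ht => ?_⟩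
    rw [(sig_hasDerivAt _ ht.2).deriv]
    exact h t ht
  · intro ν hν s hs θ h1 h2 h3 h4
    refine main_aux d u hu_smooth hu_per hu_div τ hτ_pos C p hC hp hτ_log hRE ν hν s hs.1 hs.2 θ
      (h1.mono (Set.prod_mono Set.Ioo_subset_Ico_self subset_rfl))
      (fun t ht => h2 t (Set.Ioo_subset_Ico_self ht))
      (fun t ht => h3 t (Set.Ioo_subset_Ico_self ht)) ?_
    intro t ht x
    have h := h4 t (Set.Ioo_subset_Ico_self ht) x
    rw [derivWithin_of_mem_nhds (Ico_mem_nhds ht.1 ht.2), (sig_hasDerivAt _ ht.2).deriv] at h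
    exact h
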